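/- Let (a_n)_{n≥1} be a strictly increasing sequence of positive integers such that there exist constants γ > 0 and C > 0 with a_n ≤ C·e^{γ(log n)²} for all n ≥ 1, and which is convex, i.e. a_{n+1} − a_n > a_n − a_{n−1} for all n ≥ 2. Then for Lebesgue-almost all real α, for every ε > 0 there are infinitely many N with N·D_N*({a_1 α}, …, {a_N α}) ≥ N^{7/26 − ε}. -/

import Mathlib

open Filter MeasureTheory

/-- Star-discrepancy of the first `N` points `x 1, ..., x N` of a sequence in `[0,1)`. -/
noncomputable def starDisc (N : ℕ) (x : ℕ → ℝ) : ℝ :=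
  ⨆ β : Set.Ioc (0:ℝ) 1,
    |(((Finset.Icc 1 N).filter fun n => 0 ≤ x n ∧ x n < (β : ℝ)).card : ℝ) / N - (β : ℝ)|

open scoped Pointwise ComplexConjugate

/-- The number of representations `d = x - b` with `x ∈ A` and `b ∈ B`. -/
def diffCount (A B : Finset ℤ) (d : ℤ) : ℕ := (B.filter fun b => b + d ∈ A).card

lemma strictMono_shift_sub {f : ℕ → ℤ} (hconv : ∀ i, f (i + 1) - f i < f (i + 2) - f (i + 1))
    {u : ℕ} (hu : 1 ≤ u) : StrictMono fun i => f (i + u) - f i := by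
  have hmono : StrictMono fun i => f (i + 1) - f i := strictMono_nat_of_lt_succ hconv
  refine strictMono_nat_of_lt_succ fun i => ?_
  have h := hmono (show i < i + u by omega)
  simp only at h
  have e : i + 1 + u = i + u + 1 := by omega
  rw [e]
  linarith

lemma card_sub_le_card_filter_exists_lt (S : Finset ℤ) (φ : ℤ → ℕ) (K : ℕ)
    (hφ : ∀ b ∈ S, φ b < K) :
    S.card - K ≤ (S.filter fun b => ∃ b' ∈ S, b' < b ∧ φ b' = φ b).card := by
  have hinj : (S.filter fun b => ¬ ∃ b' ∈ S, b' < b ∧ φ b' = φ b).card ≤ (Finset.range K).card := by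
    refine Finset.card_le_card_of_injOn φ (fun b hb => ?_) fun b hb c hc hbc => ?_
    · simpa using hφ b (Finset.mem_filter.1 hb).1
    · simp only [Finset.coe_filter, Set.mem_ofPred_eq, not_exists, not_and] at hb hc
      rcases lt_trichotomy b c with h | h | h
      · exact absurd hbc (hc.2 b hb.1 h)
      · exact h
      · exact absurd hbc.symm (hb.2 c hc.1 h)
  have := Finset.card_filter_add_card_filter_not (s := S)
    (fun b => ∃ b' ∈ S, b' < b ∧ φ b' = φ b)
  rw [Finset.card_range] at hinj
  omega

/-- Splitting the indices into blocks turns a popular difference into many coincidences between short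
increments, and a convex sequence has few of those. -/
lemma card_mul_sub_le_of_convex {f : ℕ → ℤ} (hf : StrictMono f)
    (hconv : ∀ i, f (i + 1) - f i < f (i + 2) - f (i + 1)) (N : ℕ) (B D : Finset ℤ)
    {t p q K : ℕ} (hp : 0 < p) (hq : 0 < q)
    (hK : ∀ i < N, ∀ j < B.card, i / p + j / q < K)
    (hD : ∀ d ∈ D, t ≤ diffCount ((Finset.range N).image f) B d) :
    D.card * (t - K) ≤ B.card * (q * p) := by
  classical
  set A := (Finset.range N).image f with hA
  set idx : ℤ → ℕ := Function.invFun f with hidx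
  have hidxf : ∀ i, idx (f i) = i := Function.leftInverse_invFun hf.injective
  have hfidx : ∀ x ∈ A, f (idx x) = x ∧ idx x < N := by
    intro x hx
    obtain ⟨i, hi, rfl⟩ := Finset.mem_image.1 hx
    rw [hidxf]
    exact ⟨rfl, Finset.mem_range.1 hi⟩
  set rk : ℤ → ℕ := fun b => (B.filter fun x => x < b).card with hrk
  have hrklt : ∀ b ∈ B, ∀ c, b < c → rk b < rk c := by
    intro b hb c hbc
    refine Finset.card_lt_card ⟨fun x hx => ?_, fun hsub => ?_⟩
    · simp only [Finset.mem_filter] at hx ⊢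
      exact ⟨hx.1, hx.2.trans hbc⟩
    · have := hsub (Finset.mem_filter.2 ⟨hb, hbc⟩)
      simp at this
  have hrkB : ∀ b ∈ B, rk b < B.card := by
    intro b hb
    refine Finset.card_lt_card ⟨Finset.filter_subset _ _, fun hsub => ?_⟩
    have := hsub hb
    simp at this
  set φ : ℤ → ℤ → ℕ := fun d b => idx (b + d) / p + rk b / q with hφ
  set S : ℤ → Finset ℤ := fun d => B.filter fun b => b + d ∈ A with hS
  set T := D.sigma fun d => (S d).filter fun b => ∃ b' ∈ S d, b' < b ∧ φ d b' = φ d b with hT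
  have hlow : D.card * (t - K) ≤ T.card := by
    rw [hT, Finset.card_sigma, ← smul_eq_mul, ← Finset.sum_const]
    refine Finset.sum_le_sum fun d hd => ?_
    refine le_trans (Nat.sub_le_sub_right (hD d hd) K)
      (card_sub_le_card_filter_exists_lt (S d) (φ d) K fun b hb => ?_)
    obtain ⟨hbB, hbA⟩ := Finset.mem_filter.1 hb
    exact hK _ (hfidx _ hbA).2 _ (hrkB b hbB)
  have hchoose : ∀ x : (_ : ℤ) × ℤ, ∃ b', x ∈ T → b' ∈ S x.1 ∧ b' < x.2 ∧ φ x.1 b' = φ x.1 x.2 := by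
    intro x
    by_cases hx : x ∈ T
    · obtain ⟨b', h1, h2⟩ := (Finset.mem_filter.1 (Finset.mem_sigma.1 hx).2).2
      exact ⟨b', fun _ => ⟨h1, h2⟩⟩
    · exact ⟨0, fun h => absurd h hx⟩
  choose pr hpr using hchoose
  have hfacts : ∀ x ∈ T, x.2 ∈ B ∧ pr x ∈ B ∧ pr x < x.2 ∧ rk (pr x) < rk x.2 ∧
      rk x.2 - rk (pr x) < q ∧ idx (pr x + x.1) < idx (x.2 + x.1) ∧
      idx (x.2 + x.1) - idx (pr x + x.1) < p ∧ f (idx (x.2 + x.1)) = x.2 + x.1 ∧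
      f (idx (pr x + x.1)) = pr x + x.1 := by
    intro x hx
    obtain ⟨h1, h2, h3⟩ := hpr x hx
    obtain ⟨hbB, hbA⟩ := Finset.mem_filter.1 (Finset.mem_filter.1 (Finset.mem_sigma.1 hx).2).1
    obtain ⟨hcB, hcA⟩ := Finset.mem_filter.1 h1
    have hr := hrklt _ hcB _ h2
    have e1 := (hfidx _ hbA).1
    have e2 := (hfidx _ hcA).1
    have hi : idx (pr x + x.1) < idx (x.2 + x.1) := by
      rw [← hf.lt_iff_lt, e1, e2]
      linarith
    have d1 : idx (pr x + x.1) / p ≤ idx (x.2 + x.1) / p := Nat.div_le_div_right hi.le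
    have d2 : rk (pr x) / q ≤ rk x.2 / q := Nat.div_le_div_right hr.le
    simp only [hφ] at h3
    have d3 : idx (pr x + x.1) / p = idx (x.2 + x.1) / p := by omega
    have d4 : rk (pr x) / q = rk x.2 / q := by omega
    have m1 := Nat.div_add_mod (idx (pr x + x.1)) p
    have m2 := Nat.div_add_mod (idx (x.2 + x.1)) p
    have m3 := Nat.div_add_mod (rk (pr x)) q
    have m4 := Nat.div_add_mod (rk x.2) q
    have l1 := Nat.mod_lt (idx (x.2 + x.1)) hp
    have l2 := Nat.mod_lt (rk x.2) hq
    rw [d3] at m1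
    rw [d4] at m3
    exact ⟨hbB, hcB, h2, hr, by omega, hi, by omega, e1, e2⟩
  have hup : T.card ≤ (B ×ˢ (Finset.range q ×ˢ Finset.range p)).card := by
    refine Finset.card_le_card_of_injOn
      (fun x => (x.2, (rk x.2 - rk (pr x), idx (x.2 + x.1) - idx (pr x + x.1)))) ?_ ?_
    · intro x hx
      obtain ⟨h1, h2, h3, h4, h5, h6, h7, h8, h9⟩ := hfacts x hx
      simp only [Finset.coe_product, Set.mem_prod, Finset.mem_coe, Finset.mem_range]
      exact ⟨h1, h5, h7⟩
    · intro x hx y hy hxy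
      obtain ⟨h1, h2, h3, h4, h5, h6, h7, h8, h9⟩ := hfacts x hx
      obtain ⟨k1, k2, k3, k4, k5, k6, k7, k8, k9⟩ := hfacts y hy
      simp only [Prod.mk.injEq] at hxy
      obtain ⟨e1, e2, e3⟩ := hxy
      have hpreq : pr x = pr y := by
        rcases lt_trichotomy (pr x) (pr y) with h | h | h
        · have := hrklt _ h2 _ h
          rw [e1] at e2 h4
          omega
        · exact h
        · have := hrklt _ k2 _ h
          rw [e1] at e2 h4
          omega
      set u := idx (x.2 + x.1) - idx (pr x + x.1) with hu
      have hm := strictMono_shift_sub hconv (u := u) (by omega)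
      have hieq : idx (pr x + x.1) = idx (pr y + y.1) := by
        apply hm.injective
        simp only
        have a1 : idx (pr x + x.1) + u = idx (x.2 + x.1) := by omega
        have a2 : idx (pr y + y.1) + u = idx (y.2 + y.1) := by omega
        rw [a1, a2, h8, h9, k8, k9, e1, hpreq]
        ring
      have hd : x.1 = y.1 := by
        have := congrArg f hieq
        rw [h9, k9, hpreq] at this
        linarith
      exact Sigma.ext hd (heq_of_eq e1)
  calc _ ≤ T.card := hlow
    _ ≤ _ := hup
    _ = _ := by simp

lemma diffCount_le_card_right (A B : Finset ℤ) (d : ℤ) : diffCount A B d ≤ B.card :=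
  Finset.card_filter_le _ _

lemma diffCount_le_card_left (A B : Finset ℤ) (d : ℤ) : diffCount A B d ≤ A.card :=
  Finset.card_le_card_of_injOn (fun b => b + d) (fun _ hb => (Finset.mem_filter.1 hb).2)
    fun _ _ _ _ h => by simpa using h

/-- A set has few popular differences against any other set, in the strength provided by convexity. -/
def FewPopularDiffs (A : Finset ℤ) : Prop :=
  ∀ (B D : Finset ℤ) (t : ℕ), 1 ≤ t → (∀ d ∈ D, t ≤ diffCount A B d) →
    D.card * t ^ 3 ≤ 75 * (A.card * B.card ^ 2)

lemma card_le_of_one_le_diffCount {A B D : Finset ℤ} (hD : ∀ d ∈ D, 1 ≤ diffCount A B d) :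
    D.card ≤ A.card * B.card := by
  classical
  have : D ⊆ (A ×ˢ B).image fun x => x.1 - x.2 := by
    intro d hd
    obtain ⟨b, hb⟩ := Finset.card_pos.1 (hD d hd)
    obtain ⟨h1, h2⟩ := Finset.mem_filter.1 hb
    exact Finset.mem_image.2 ⟨(b + d, b), Finset.mem_product.2 ⟨h2, h1⟩, by simp⟩
  exact (Finset.card_le_card this).trans (Finset.card_image_le.trans (Finset.card_product _ _).le)

lemma fewPopularDiffs_of_convex {f : ℕ → ℤ} (hf : StrictMono f)
    (hconv : ∀ i, f (i + 1) - f i < f (i + 2) - f (i + 1)) (N : ℕ) :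
    FewPopularDiffs ((Finset.range N).image f) := by
  intro B D t ht hD
  have hcard : ((Finset.range N).image f).card = N := by
    rw [Finset.card_image_of_injective _ hf.injective, Finset.card_range]
  rcases D.eq_empty_or_nonempty with rfl | ⟨d, hd⟩
  · simp
  have htN : t ≤ N := hcard ▸ (hD d hd).trans (diffCount_le_card_left _ _ _)
  have htB : t ≤ B.card := (hD d hd).trans (diffCount_le_card_right _ _ _)
  rcases ht.eq_or_lt with rfl | ht2
  · have h := card_le_of_one_le_diffCount hD
    rw [hcard] at h ⊢
    nlinarith [Nat.mul_le_mul_left N (Nat.mul_le_mul htB le_rfl : 1 * B.card ≤ B.card * B.card)]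
  set M := B.card with hM
  have key := card_mul_sub_le_of_convex hf hconv N B D (t := t) (p := 4 * N / t + 1)
    (q := 4 * M / t + 1) (K := (t + 1) / 2) (Nat.succ_pos _) (Nat.succ_pos _) ?_ hD
  · rw [hcard]
    have h1 : t * (4 * N / t + 1) ≤ 5 * N := by
      have := Nat.mul_div_le (4 * N) t
      linarith
    have h2 : t * (4 * M / t + 1) ≤ 5 * M := by
      have := Nat.mul_div_le (4 * M) t
      linarith
    have h3 : t ≤ 3 * (t - (t + 1) / 2) := by omega
    calc D.card * t ^ 3 = (D.card * t) * (t * t) := by ring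
      _ ≤ (D.card * (3 * (t - (t + 1) / 2))) * (t * t) := by gcongr
      _ = 3 * (D.card * (t - (t + 1) / 2)) * (t * t) := by ring
      _ ≤ 3 * (M * ((4 * M / t + 1) * (4 * N / t + 1))) * (t * t) := by gcongr
      _ = 3 * (M * ((t * (4 * M / t + 1)) * (t * (4 * N / t + 1)))) := by ring
      _ ≤ 3 * (M * ((5 * M) * (5 * N))) := by gcongr
      _ = 75 * (N * M ^ 2) := by ring
  · have aux : ∀ n i : ℕ, i < n → 4 * (i / (4 * n / t + 1)) < t := by
      intro n i hi
      by_contra! h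
      have h1 := Nat.div_mul_le_self i (4 * n / t + 1)
      have h2 : 4 * n < t * (4 * n / t + 1) := by
        have := Nat.lt_mul_div_succ (4 * n) (show 0 < t by omega)
        exact this
      have h3 : t * (4 * n / t + 1) ≤ 4 * (i / (4 * n / t + 1)) * (4 * n / t + 1) :=
        Nat.mul_le_mul_right _ h
      linarith
    intro i hi j hj
    have := aux N i hi
    have := aux M j hj
    omega

lemma sum_sum_sub_eq_sum_diffCount (A B U : Finset ℤ) (hU : A - B ⊆ U) (F : ℤ → ℝ) :
    ∑ b ∈ B, ∑ x ∈ A, F (x - b) = ∑ d ∈ U, (diffCount A B d : ℝ) * F d := by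
  have h1 : ∀ b ∈ B, ∑ x ∈ A, F (x - b) = ∑ d ∈ U, if b + d ∈ A then F d else 0 := by
    intro b hb
    rw [← Finset.sum_filter]
    refine Finset.sum_bij' (fun x _ => x - b) (fun d _ => b + d) ?_ ?_ ?_ ?_ ?_
    · intro x hx
      simp only [Finset.mem_filter, add_sub_cancel]
      exact ⟨hU (Finset.sub_mem_sub hx hb), hx⟩
    · intro d hd
      exact (Finset.mem_filter.1 hd).2
    · intros; ring
    · intros; ring
    · intros; rfl
  rw [Finset.sum_congr rfl h1, Finset.sum_comm]
  refine Finset.sum_congr rfl fun d _ => ?_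
  rw [← Finset.sum_filter, Finset.sum_const, nsmul_eq_mul, diffCount]

lemma sum_diffCount_le (A B U : Finset ℤ) :
    ∑ d ∈ U, (diffCount A B d : ℝ) ≤ A.card * B.card := by
  have h := sum_sum_sub_eq_sum_diffCount A B (U ∪ (A - B)) Finset.subset_union_right fun _ => 1
  simp only [Finset.sum_const, nsmul_eq_mul, mul_one] at h
  calc ∑ d ∈ U, (diffCount A B d : ℝ) ≤ ∑ d ∈ U ∪ (A - B), (diffCount A B d : ℝ) :=
        Finset.sum_le_sum_of_subset_of_nonneg Finset.subset_union_left fun _ _ _ => by positivity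
    _ = _ := by rw [← h]; ring

lemma FewPopularDiffs.sum_cube_le {A : Finset ℤ} (hA : FewPopularDiffs A) (B U : Finset ℤ) :
    ∑ d ∈ U, (diffCount A B d : ℝ) ^ 3 ≤
      600 * (Nat.log 2 A.card + 1 : ℕ) * (A.card * (B.card : ℝ) ^ 2) := by
  set L := Nat.log 2 A.card + 1 with hL
  have h1 : ∀ d ∈ U, (diffCount A B d : ℝ) ^ 3 ≤
      ∑ j ∈ Finset.range L, if 2 ^ j ≤ diffCount A B d then (8 : ℝ) * ((2 : ℝ) ^ j) ^ 3 else 0 := by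
    intro d _
    rcases Nat.eq_zero_or_pos (diffCount A B d) with h0 | h0
    · rw [h0]
      simp only [Nat.cast_zero]
      rw [zero_pow (by norm_num)]
      exact Finset.sum_nonneg fun _ _ => by split_ifs <;> positivity
    set r := diffCount A B d with hr
    have hj : Nat.log 2 r ∈ Finset.range L := by
      rw [Finset.mem_range, hL, Nat.lt_succ_iff]
      exact Nat.log_mono_right (diffCount_le_card_left A B d)
    refine le_trans ?_ (Finset.single_le_sum (f := fun j => if 2 ^ j ≤ r then
      (8 : ℝ) * ((2 : ℝ) ^ j) ^ 3 else 0) (fun _ _ => by split_ifs <;> positivity) hj)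
    rw [if_pos (Nat.pow_log_le_self 2 h0.ne')]
    have : (r : ℝ) ≤ 2 * 2 ^ Nat.log 2 r := by
      have := (Nat.lt_pow_succ_log_self (b := 2) (by norm_num) r).le
      rw [pow_succ'] at this
      exact_mod_cast this
    calc (r : ℝ) ^ 3 ≤ (2 * 2 ^ Nat.log 2 r) ^ 3 := by gcongr
      _ = _ := by ring
  refine (Finset.sum_le_sum h1).trans ?_
  rw [Finset.sum_comm]
  calc _ ≤ ∑ j ∈ Finset.range L, (600 : ℝ) * (A.card * (B.card : ℝ) ^ 2) := by
        refine Finset.sum_le_sum fun j _ => ?_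
        rw [← Finset.sum_filter, Finset.sum_const, nsmul_eq_mul]
        have := hA B (U.filter fun d => 2 ^ j ≤ diffCount A B d) (2 ^ j) Nat.one_le_two_pow
          fun d hd => (Finset.mem_filter.1 hd).2
        have h : ((U.filter fun d => 2 ^ j ≤ diffCount A B d).card : ℝ) * ((2 : ℝ) ^ j) ^ 3 ≤
          75 * (A.card * (B.card : ℝ) ^ 2) := by exact_mod_cast this
        linarith
    _ = _ := by
        rw [Finset.sum_const, nsmul_eq_mul, Finset.card_range]
        ring

lemma FewPopularDiffs.sum_sq_sq_le {A : Finset ℤ} (hA : FewPopularDiffs A) (B U : Finset ℤ) :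
    (∑ d ∈ U, (diffCount A B d : ℝ) ^ 2) ^ 2 ≤
      600 * (Nat.log 2 A.card + 1 : ℕ) * ((A.card : ℝ) ^ 2 * (B.card : ℝ) ^ 3) := by
  have hcs : (∑ d ∈ U, (diffCount A B d : ℝ) ^ 2) ^ 2 ≤
      (∑ d ∈ U, (diffCount A B d : ℝ)) * ∑ d ∈ U, (diffCount A B d : ℝ) ^ 3 := by
    refine Finset.sum_sq_le_sum_mul_sum_of_sq_le_mul U (fun _ _ => by positivity)
      (fun _ _ => by positivity) fun _ _ => le_of_eq (by ring)
  calc _ ≤ _ := hcs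
    _ ≤ (A.card * B.card) *
        (600 * (Nat.log 2 A.card + 1 : ℕ) * (A.card * (B.card : ℝ) ^ 2)) := by
        gcongr
        · exact sum_diffCount_le A B U
        · exact hA.sum_cube_le B U
    _ = _ := by ring

lemma sum_sum_diffCount_eq (A B C : Finset ℤ) :
    ∑ b ∈ B, ∑ c ∈ C, (diffCount A A (c - b) : ℝ) =
      ∑ x ∈ A - B, (diffCount A B x : ℝ) * diffCount A C x := by
  rw [← sum_sum_sub_eq_sum_diffCount A B (A - B) subset_rfl fun x => (diffCount A C x : ℝ)]
  refine Finset.sum_congr rfl fun b _ => ?_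
  simp only [diffCount, Finset.card_filter, Nat.cast_sum]
  rw [Finset.sum_comm]
  refine Finset.sum_congr rfl fun x _ => Finset.sum_congr rfl fun c _ => ?_
  rw [show x + (c - b) = c + (x - b) by ring]

lemma FewPopularDiffs.sum_sum_pow_four_le {A : Finset ℤ} (hA : FewPopularDiffs A)
    (B C : Finset ℤ) :
    (∑ b ∈ B, ∑ c ∈ C, (diffCount A A (c - b) : ℝ)) ^ 4 ≤
      600 ^ 2 * (Nat.log 2 A.card + 1 : ℕ) ^ 2 *
        ((A.card : ℝ) ^ 4 * ((B.card : ℝ) ^ 3 * (C.card : ℝ) ^ 3)) := by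
  rw [sum_sum_diffCount_eq]
  have hcs := Finset.sum_mul_sq_le_sq_mul_sq (A - B) (fun x => (diffCount A B x : ℝ))
    fun x => (diffCount A C x : ℝ)
  calc _ = ((∑ x ∈ A - B, (diffCount A B x : ℝ) * diffCount A C x) ^ 2) ^ 2 := by ring
    _ ≤ ((∑ x ∈ A - B, (diffCount A B x : ℝ) ^ 2) * ∑ x ∈ A - B, (diffCount A C x : ℝ) ^ 2) ^ 2 := by
        gcongr
    _ = (∑ x ∈ A - B, (diffCount A B x : ℝ) ^ 2) ^ 2 *
        (∑ x ∈ A - B, (diffCount A C x : ℝ) ^ 2) ^ 2 := by ring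
    _ ≤ (600 * (Nat.log 2 A.card + 1 : ℕ) * ((A.card : ℝ) ^ 2 * (B.card : ℝ) ^ 3)) *
        (600 * (Nat.log 2 A.card + 1 : ℕ) * ((A.card : ℝ) ^ 2 * (C.card : ℝ) ^ 3)) := by
        gcongr
        · exact hA.sum_sq_sq_le B _
        · exact hA.sum_sq_sq_le C _
    _ = _ := by ring

lemma three_mul_le_mul_sq_add {u v : ℝ} (hu : 0 < u) (hv : 0 < v) :
    3 ≤ u * v + 1 / u + 1 / v := by
  have hw : 0 < √(u * v) := Real.sqrt_pos.2 (by positivity)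
  have hw2 : √(u * v) ^ 2 = u * v := Real.sq_sqrt (by positivity)
  have h1 : 2 * √(u * v) ≤ u + v := by
    nlinarith [sq_nonneg (u - v), Real.sqrt_nonneg (u * v)]
  have h2 : 3 * (u * v) ≤ (u * v) ^ 2 + u + v := by
    have : 0 ≤ √(u * v) * ((√(u * v) - 1) ^ 2 * (√(u * v) + 2)) := by positivity
    have e : √(u * v) * ((√(u * v) - 1) ^ 2 * (√(u * v) + 2)) =
        (√(u * v) ^ 2) ^ 2 + 2 * √(u * v) - 3 * √(u * v) ^ 2 := by ring
    rw [hw2] at e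
    linarith
  have e : u * v + 1 / u + 1 / v = ((u * v) ^ 2 + u + v) / (u * v) := by
    field_simp
    ring
  rw [e, le_div_iff₀ (by positivity)]
  exact h2

/-- A lower bound for the number of walks of length three in a weighted graph. -/
lemma sum_pow_three_le_walks {ι : Type*} (A : Finset ι) (M : ι → ι → ℝ) (hM : ∀ x y, 0 ≤ M x y)
    (hsymm : ∀ x y, M x y = M y x) :
    (∑ x ∈ A, ∑ y ∈ A, M x y) ^ 3 ≤ (A.card : ℝ) ^ 2 *
      ∑ x ∈ A, ∑ y ∈ A, M x y * ((∑ z ∈ A, M x z) * ∑ z ∈ A, M y z) := by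
  set n : ι → ℝ := fun x => ∑ z ∈ A, M x z with hn
  have hn0 : ∀ x, 0 ≤ n x := fun x => Finset.sum_nonneg fun _ _ => hM _ _
  set P := ∑ x ∈ A, n x with hP
  have hP0 : 0 ≤ P := Finset.sum_nonneg fun _ _ => hn0 _
  change P ^ 3 ≤ (A.card : ℝ) ^ 2 * ∑ x ∈ A, ∑ y ∈ A, M x y * (n x * n y)
  rcases hP0.eq_or_lt with h0 | hPpos
  · rw [← h0]
    have : 0 ≤ ∑ x ∈ A, ∑ y ∈ A, M x y * (n x * n y) :=
      Finset.sum_nonneg fun x _ => Finset.sum_nonneg fun y _ =>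
        mul_nonneg (hM _ _) (mul_nonneg (hn0 _) (hn0 _))
    simpa using mul_nonneg (sq_nonneg (A.card : ℝ)) this
  have hN : 0 < (A.card : ℝ) := by
    rcases A.eq_empty_or_nonempty with rfl | h
    · simp [hP] at hPpos
    · exact_mod_cast h.card_pos
  set N : ℝ := (A.card : ℝ) with hNdef
  set κ := P / N with hκ
  have hκpos : 0 < κ := by positivity
  have hpt : ∀ x ∈ A, ∀ y ∈ A, 3 * M x y ≤
      M x y * (n x * n y) / κ ^ 2 + κ * (M x y / n x) + κ * (M y x / n y) := by
    intro x hx y hy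
    rcases (hM x y).eq_or_lt with h | h
    · rw [← hsymm x y, ← h]; simp
    have hx' : 0 < n x := h.trans_le (Finset.single_le_sum (f := fun z => M x z)
      (fun _ _ => hM _ _) hy)
    have hy' : 0 < n y := by
      rw [hsymm] at h
      exact h.trans_le (Finset.single_le_sum (f := fun z => M y z) (fun _ _ => hM _ _) hx)
    have := three_mul_le_mul_sq_add (div_pos hx' hκpos) (div_pos hy' hκpos)
    have h3 := mul_le_mul_of_nonneg_left this h.le
    rw [← hsymm x y]
    calc 3 * M x y = M x y * 3 := by ring
      _ ≤ _ := h3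
      _ = _ := by field_simp
  have hrow : ∀ x ∈ A, ∑ y ∈ A, κ * (M x y / n x) ≤ κ := by
    intro x _
    rw [← Finset.mul_sum, ← Finset.sum_div]
    refine mul_le_of_le_one_right hκpos.le (div_self_le_one _)
  have hsum : 3 * P ≤ (∑ x ∈ A, ∑ y ∈ A, M x y * (n x * n y)) / κ ^ 2 + N * κ + N * κ := by
    have e1 : ∑ x ∈ A, ∑ y ∈ A, κ * (M x y / n x) ≤ N * κ := by
      refine (Finset.sum_le_sum hrow).trans ?_
      rw [Finset.sum_const, nsmul_eq_mul]
    have e2 : ∑ x ∈ A, ∑ y ∈ A, κ * (M y x / n y) ≤ N * κ := by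
      rw [Finset.sum_comm]
      exact e1
    have := Finset.sum_le_sum fun x hx => Finset.sum_le_sum (hpt x hx)
    simp only [Finset.sum_add_distrib, ← Finset.mul_sum, ← Finset.sum_div] at this e1 e2
    have hP' : ∑ x ∈ A, ∑ y ∈ A, M x y = P := rfl
    rw [hP'] at this
    linarith
  have hNκ : N * κ = P := by rw [hκ]; field_simp
  rw [hNκ] at hsum
  have h2 : P * κ ^ 2 ≤ ∑ x ∈ A, ∑ y ∈ A, M x y * (n x * n y) := by
    rw [← le_div_iff₀ (by positivity)]
    linarith
  calc P ^ 3 = N ^ 2 * (P * κ ^ 2) := by rw [hκ]; field_simp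
    _ ≤ _ := by gcongr

lemma exists_sum_le_mul_sum_fiber {ι : Type*} (U : Finset ι) (F : ι → ℝ) (ℓ : ι → ℕ) {L : ℕ}
    (hL : 0 < L) (hℓ : ∀ x ∈ U, ℓ x < L) :
    ∃ j < L, ∑ x ∈ U, F x ≤ L * ∑ x ∈ U with ℓ x = j, F x := by
  have h := Finset.sum_fiberwise_of_maps_to (s := U) (t := Finset.range L) (g := ℓ)
    (fun x hx => Finset.mem_range.2 (hℓ x hx)) F
  obtain ⟨j, hj, hmax⟩ := Finset.exists_max_image (Finset.range L)
    (fun j => ∑ x ∈ U with ℓ x = j, F x) ⟨0, Finset.mem_range.2 hL⟩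
  refine ⟨j, Finset.mem_range.1 hj, ?_⟩
  rw [← h]
  refine (Finset.sum_le_sum hmax).trans ?_
  simp

lemma diffCount_neg (A : Finset ℤ) (d : ℤ) : diffCount A A (-d) = diffCount A A d := by
  refine Finset.card_bij' (fun b _ => b + -d) (fun b _ => b + d) ?_ ?_ ?_ ?_
  · intro b hb
    obtain ⟨h1, h2⟩ := Finset.mem_filter.1 hb
    exact Finset.mem_filter.2 ⟨h2, by simpa using h1⟩
  · intro b hb
    obtain ⟨h1, h2⟩ := Finset.mem_filter.1 hb
    exact Finset.mem_filter.2 ⟨h2, by simpa using h1⟩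
  · intros; ring
  · intros; ring

/-- The quadratic form with kernel `diffCount A A (x - y)` is a sum of squares. -/
lemma sum_mul_diffCount_eq_sum_sq (A : Finset ℤ) (v : ℤ → ℝ) :
    ∑ x ∈ A, ∑ y ∈ A, v x * v y * diffCount A A (x - y) =
      ∑ u ∈ A - A, (∑ x ∈ A, if x - u ∈ A then v x else 0) ^ 2 := by
  have hg : ∀ x ∈ A, ∀ y ∈ A, (diffCount A A (x - y) : ℝ) =
      ∑ u ∈ A - A, (if x - u ∈ A then 1 else 0) * (if y - u ∈ A then 1 else 0) := by
    intro x hx y hy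
    have : ∀ u, (if x - u ∈ A then (1 : ℝ) else 0) * (if y - u ∈ A then 1 else 0) =
        if x - u ∈ A ∧ y - u ∈ A then 1 else 0 := by
      intro u
      split_ifs <;> simp_all
    simp only [this]
    rw [diffCount, Finset.sum_boole]
    norm_cast
    refine Finset.card_bij' (fun b _ => y - b) (fun u _ => y - u) ?_ ?_ ?_ ?_
    · intro b hb
      obtain ⟨h1, h2⟩ := Finset.mem_filter.1 hb
      refine Finset.mem_filter.2 ⟨Finset.sub_mem_sub hy h1, ?_, ?_⟩
      · rwa [show x - (y - b) = b + (x - y) by ring]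
      · rwa [show y - (y - b) = b by ring]
    · intro u hu
      obtain ⟨h1, h2, h3⟩ := Finset.mem_filter.1 hu
      refine Finset.mem_filter.2 ⟨h3, ?_⟩
      rwa [show y - u + (x - y) = x - u by ring]
    · intros; ring
    · intros; ring
  calc _ = ∑ x ∈ A, ∑ y ∈ A, ∑ u ∈ A - A, (if x - u ∈ A then v x else 0) *
        (if y - u ∈ A then v y else 0) := by
        refine Finset.sum_congr rfl fun x hx => Finset.sum_congr rfl fun y hy => ?_
        rw [hg x hx y hy, Finset.mul_sum]
        refine Finset.sum_congr rfl fun u _ => ?_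
        split_ifs <;> simp
    _ = ∑ x ∈ A, ∑ u ∈ A - A, ∑ y ∈ A, (if x - u ∈ A then v x else 0) *
        (if y - u ∈ A then v y else 0) := Finset.sum_congr rfl fun x _ => Finset.sum_comm
    _ = ∑ u ∈ A - A, ∑ x ∈ A, ∑ y ∈ A, (if x - u ∈ A then v x else 0) *
        (if y - u ∈ A then v y else 0) := Finset.sum_comm
    _ = _ := by
        refine Finset.sum_congr rfl fun u _ => ?_
        rw [sq, Finset.sum_mul_sum]

lemma sum_mul_diffCount_sum_le (A : Finset ℤ) (M : ℤ → ℤ → ℝ) :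
    ∑ x ∈ A, ∑ y ∈ A, (∑ z ∈ A, M x z) * (∑ z ∈ A, M y z) * diffCount A A (x - y) ≤
      A.card * ∑ z ∈ A, ∑ x ∈ A, ∑ y ∈ A, M x z * M y z * diffCount A A (x - y) := by
  have h := sum_mul_diffCount_eq_sum_sq A fun x => ∑ z ∈ A, M x z
  have h' : ∀ z, _ := fun z => sum_mul_diffCount_eq_sum_sq A fun x => M x z
  rw [h, Finset.sum_congr rfl fun z _ => h' z, Finset.sum_comm, Finset.mul_sum]
  refine Finset.sum_le_sum fun u _ => ?_
  have e : (∑ x ∈ A, if x - u ∈ A then ∑ z ∈ A, M x z else 0) =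
      ∑ z ∈ A, ∑ x ∈ A, if x - u ∈ A then M x z else 0 := by
    rw [Finset.sum_comm]
    refine Finset.sum_congr rfl fun x _ => ?_
    split_ifs <;> simp
  rw [e]
  exact sq_sum_le_card_mul_sum_sq

/-- Triangles with two sides in `D`, weighted by the multiplicity of the third side. -/
lemma sq_triangles_le (A D : Finset ℤ) :
    (∑ z ∈ A, ∑ x ∈ A, ∑ y ∈ A, (if x - z ∈ D then (1 : ℝ) else 0) *
      (if y - z ∈ D then 1 else 0) * diffCount A A (x - y)) ^ 2 ≤
    (∑ d ∈ A - A, (diffCount A A d : ℝ) ^ 3) *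
      ∑ s ∈ D, ∑ s' ∈ D, (diffCount A A (s - s') : ℝ) ^ 2 := by
  have hre : ∀ z ∈ A, ∀ F : ℤ → ℝ, ∑ x ∈ A, (if x - z ∈ D then F (x - z) else 0) =
      ∑ s ∈ D, if z + s ∈ A then F s else 0 := by
    intro z hz F
    rw [← Finset.sum_filter, ← Finset.sum_filter]
    refine Finset.sum_bij' (fun x _ => x - z) (fun s _ => z + s) ?_ ?_ ?_ ?_ ?_
    · intro x hx
      obtain ⟨h1, h2⟩ := Finset.mem_filter.1 hx
      exact Finset.mem_filter.2 ⟨h2, by simpa using h1⟩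
    · intro x hx
      obtain ⟨h1, h2⟩ := Finset.mem_filter.1 hx
      exact Finset.mem_filter.2 ⟨h2, by simpa using h1⟩
    · intros; ring
    · intros; ring
    · intros; rfl
  set h : ℤ → ℤ → ℝ := fun z s => if z + s ∈ A then 1 else 0 with hh
  have e1 : ∑ z ∈ A, ∑ x ∈ A, ∑ y ∈ A, (if x - z ∈ D then (1 : ℝ) else 0) *
      (if y - z ∈ D then 1 else 0) * diffCount A A (x - y) =
      ∑ p ∈ D ×ˢ D, (∑ z ∈ A, h z p.1 * h z p.2) * (diffCount A A (p.1 - p.2) : ℝ) := by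
    simp only [Finset.sum_mul]
    rw [Finset.sum_comm (s := D ×ˢ D)]
    refine Finset.sum_congr rfl fun z hz => ?_
    rw [Finset.sum_product]
    calc _ = ∑ x ∈ A, if x - z ∈ D then ∑ y ∈ A, (if y - z ∈ D then
          (diffCount A A ((x - z) - (y - z)) : ℝ) else 0) else 0 := by
          refine Finset.sum_congr rfl fun x _ => ?_
          split_ifs
          · refine Finset.sum_congr rfl fun y _ => ?_
            rw [show x - z - (y - z) = x - y by ring]
            split_ifs <;> simp
          · simp
      _ = ∑ s ∈ D, if z + s ∈ A then ∑ y ∈ A, (if y - z ∈ D then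
          (diffCount A A (s - (y - z)) : ℝ) else 0) else 0 :=
          hre z hz fun s => ∑ y ∈ A, (if y - z ∈ D then
            (diffCount A A (s - (y - z)) : ℝ) else 0)
      _ = _ := by
          refine Finset.sum_congr rfl fun s _ => ?_
          rw [hre z hz fun s' => (diffCount A A (s - s') : ℝ)]
          simp only [hh]
          split_ifs
          · refine Finset.sum_congr rfl fun y _ => ?_
            split_ifs <;> simp
          · simp
  have e2 : ∑ p ∈ D ×ˢ D, (∑ z ∈ A, h z p.1 * h z p.2) ^ 2 =
      ∑ z ∈ A, ∑ w ∈ A, (∑ s ∈ D, h z s * h w s) ^ 2 := by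
    simp only [sq, Finset.sum_mul_sum]
    rw [Finset.sum_product]
    calc _ = ∑ s ∈ D, ∑ z ∈ A, ∑ s' ∈ D, ∑ w ∈ A, h z s * h z s' * (h w s * h w s') :=
          Finset.sum_congr rfl fun s _ => Finset.sum_comm
      _ = ∑ z ∈ A, ∑ s ∈ D, ∑ s' ∈ D, ∑ w ∈ A, h z s * h z s' * (h w s * h w s') :=
          Finset.sum_comm
      _ = ∑ z ∈ A, ∑ s ∈ D, ∑ w ∈ A, ∑ s' ∈ D, h z s * h z s' * (h w s * h w s') :=
          Finset.sum_congr rfl fun z _ => Finset.sum_congr rfl fun s _ => Finset.sum_comm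
      _ = ∑ z ∈ A, ∑ w ∈ A, ∑ s ∈ D, ∑ s' ∈ D, h z s * h z s' * (h w s * h w s') :=
          Finset.sum_congr rfl fun z _ => Finset.sum_comm
      _ = _ := by
          refine Finset.sum_congr rfl fun z _ => Finset.sum_congr rfl fun w _ =>
            Finset.sum_congr rfl fun s _ => Finset.sum_congr rfl fun s' _ => ?_
          ring
  have e3 : ∀ z w, ∑ s ∈ D, h z s * h w s ≤ (diffCount A A (w - z) : ℝ) := by
    intro z w
    have : ∀ s, h z s * h w s = if z + s ∈ A ∧ w + s ∈ A then 1 else 0 := by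
      intro s
      simp only [hh]
      split_ifs <;> simp_all
    simp only [this]
    rw [Finset.sum_boole, diffCount]
    norm_cast
    refine Finset.card_le_card_of_injOn (fun s => z + s) (fun s hs => ?_)
      fun _ _ _ _ h => by simpa using h
    obtain ⟨h1, h2, h3⟩ := Finset.mem_filter.1 hs
    refine Finset.mem_filter.2 ⟨h2, ?_⟩
    rwa [show z + s + (w - z) = w + s by ring]
  have h0 : ∀ z s, 0 ≤ h z s := fun z s => by simp only [hh]; split_ifs <;> simp
  rw [e1]
  refine (Finset.sum_mul_sq_le_sq_mul_sq _ _ _).trans ?_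
  rw [e2, Finset.sum_product]
  refine mul_le_mul_of_nonneg_right ?_ (by positivity)
  calc _ ≤ ∑ z ∈ A, ∑ w ∈ A, (diffCount A A (w - z) : ℝ) ^ 2 := by
        refine Finset.sum_le_sum fun z _ => Finset.sum_le_sum fun w _ => ?_
        exact pow_le_pow_left₀ (Finset.sum_nonneg fun s _ => mul_nonneg (h0 _ _) (h0 _ _)) (e3 z w) 2
    _ = _ := by
        rw [sum_sum_sub_eq_sum_diffCount A A (A - A) subset_rfl
          fun d => (diffCount A A d : ℝ) ^ 2]
        exact Finset.sum_congr rfl fun d _ => by ring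

lemma one_le_diffCount_of_mem_sub {A : Finset ℤ} {d : ℤ} (hd : d ∈ A - A) :
    1 ≤ diffCount A A d := by
  obtain ⟨x, hx, y, hy, rfl⟩ := Finset.mem_sub.1 hd
  exact Finset.card_pos.2 ⟨y, Finset.mem_filter.2 ⟨hy, by simpa using hx⟩⟩

/-- The differences of `A` whose multiplicity lies in `[2 ^ j, 2 ^ (j + 1))`. -/
def diffLevel (A : Finset ℤ) (j : ℕ) : Finset ℤ :=
  (A - A).filter fun d => Nat.log 2 (diffCount A A d) = j

lemma pow_le_diffCount {A : Finset ℤ} {j : ℕ} {d : ℤ} (hd : d ∈ diffLevel A j) :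
    2 ^ j ≤ diffCount A A d := by
  obtain ⟨h1, rfl⟩ := Finset.mem_filter.1 hd
  exact Nat.pow_log_le_self 2 (Nat.one_le_iff_ne_zero.1 (one_le_diffCount_of_mem_sub h1))

lemma pow_le_cast_diffCount {A : Finset ℤ} {j : ℕ} {d : ℤ} (hd : d ∈ diffLevel A j) :
    (2 : ℝ) ^ j ≤ diffCount A A d := by
  exact_mod_cast pow_le_diffCount hd

lemma diffCount_le_two_mul_pow {A : Finset ℤ} {j : ℕ} {d : ℤ} (hd : d ∈ diffLevel A j) :
    (diffCount A A d : ℝ) ≤ 2 * 2 ^ j := by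
  obtain ⟨h1, rfl⟩ := Finset.mem_filter.1 hd
  have := (Nat.lt_pow_succ_log_self (b := 2) (by norm_num) (diffCount A A d)).le
  rw [pow_succ'] at this
  exact_mod_cast this

lemma neg_mem_diffLevel {A : Finset ℤ} {j : ℕ} {d : ℤ} (hd : d ∈ diffLevel A j) :
    -d ∈ diffLevel A j := by
  obtain ⟨h1, h2⟩ := Finset.mem_filter.1 hd
  refine Finset.mem_filter.2 ⟨?_, by rwa [diffCount_neg]⟩
  obtain ⟨x, hx, y, hy, rfl⟩ := Finset.mem_sub.1 h1
  rw [neg_sub]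
  exact Finset.sub_mem_sub hy hx

lemma FewPopularDiffs.card_diffLevel_le {A : Finset ℤ} (hA : FewPopularDiffs A) (j : ℕ) :
    ((diffLevel A j).card : ℝ) * ((2 : ℝ) ^ j) ^ 3 ≤ 75 * (A.card : ℝ) ^ 3 := by
  have := hA A (diffLevel A j) (2 ^ j) Nat.one_le_two_pow fun d hd => pow_le_diffCount hd
  have h : ((diffLevel A j).card : ℝ) * ((2 : ℝ) ^ j) ^ 3 ≤
      75 * (A.card * (A.card : ℝ) ^ 2) := by exact_mod_cast this
  linarith

/-- Pairs of elements of one level whose difference lies in another level. -/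
lemma FewPopularDiffs.sum_level_pair_le {A : Finset ℤ} (hA : FewPopularDiffs A) (j i : ℕ) :
    ((2 : ℝ) ^ j) ^ 5 * (∑ p ∈ diffLevel A j ×ˢ diffLevel A j with
        p.1 - p.2 ∈ diffLevel A i, (diffCount A A (p.1 - p.2) : ℝ) ^ 2) ^ 4 ≤
      256 * 600 ^ 2 * 75 ^ 3 * (Nat.log 2 A.card + 1 : ℕ) ^ 2 *
        ((A.card : ℝ) ^ 13 * ((diffLevel A j).card : ℝ) ^ 3) := by
  set D := diffLevel A j with hD
  set G := diffLevel A i with hG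
  set L : ℝ := ((Nat.log 2 A.card + 1 : ℕ) : ℝ) with hL
  set N : ℝ := (A.card : ℝ) with hN
  set t : ℝ := (2 : ℝ) ^ j with ht
  set ρ : ℝ := (2 : ℝ) ^ i with hρ
  set X := ∑ p ∈ D ×ˢ D with p.1 - p.2 ∈ G, (diffCount A A (p.1 - p.2) : ℝ) ^ 2 with hX
  have hX0 : 0 ≤ X := Finset.sum_nonneg fun _ _ => by positivity
  have htpos : 0 < t := by positivity
  have hρpos : 0 < ρ := by positivity
  have hDt : (D.card : ℝ) * t ^ 3 ≤ 75 * N ^ 3 := hA.card_diffLevel_le j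
  have hGρ : (G.card : ℝ) * ρ ^ 3 ≤ 75 * N ^ 3 := hA.card_diffLevel_le i
  rcases le_total i j with hij | hij
  · have hρt : ρ ≤ t := pow_le_pow_right₀ (by norm_num) hij
    set Y := ∑ b ∈ D, ∑ c ∈ D, (diffCount A A (c - b) : ℝ) with hY
    have hY0 : 0 ≤ Y := Finset.sum_nonneg fun _ _ => Finset.sum_nonneg fun _ _ => by positivity
    have hY4 : Y ^ 4 ≤ 600 ^ 2 * L ^ 2 * (N ^ 4 * ((D.card : ℝ) ^ 3 * (D.card : ℝ) ^ 3)) :=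
      hA.sum_sum_pow_four_le D D
    have hXY : X ≤ 2 * t * Y := by
      calc X ≤ ∑ p ∈ D ×ˢ D with p.1 - p.2 ∈ G, 2 * t * (diffCount A A (p.1 - p.2) : ℝ) := by
            refine Finset.sum_le_sum fun p hp => ?_
            have := diffCount_le_two_mul_pow (Finset.mem_filter.1 hp).2
            rw [sq]
            gcongr
            linarith
        _ ≤ ∑ p ∈ D ×ˢ D, 2 * t * (diffCount A A (p.1 - p.2) : ℝ) :=
            Finset.sum_le_sum_of_subset_of_nonneg (Finset.filter_subset _ _)
              fun _ _ _ => by positivity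
        _ = 2 * t * Y := by rw [← Finset.mul_sum, Finset.sum_product_right]
    calc t ^ 5 * X ^ 4 ≤ t ^ 5 * (2 * t * Y) ^ 4 := by gcongr
      _ = 16 * t ^ 9 * Y ^ 4 := by ring
      _ ≤ 16 * t ^ 9 * (600 ^ 2 * L ^ 2 * (N ^ 4 * ((D.card : ℝ) ^ 3 * (D.card : ℝ) ^ 3))) := by
          gcongr
      _ = 16 * 600 ^ 2 * L ^ 2 * N ^ 4 * (D.card : ℝ) ^ 3 * ((D.card : ℝ) * t ^ 3) ^ 3 := by ring
      _ ≤ 256 * 600 ^ 2 * L ^ 2 * N ^ 4 * (D.card : ℝ) ^ 3 * (75 * N ^ 3) ^ 3 := by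
          gcongr
          norm_num
      _ = _ := by ring
  · have hρt : t ≤ ρ := pow_le_pow_right₀ (by norm_num) hij
    set Y := ∑ b ∈ D, ∑ c ∈ G, (diffCount A A (c - b) : ℝ) with hY
    have hY0 : 0 ≤ Y := Finset.sum_nonneg fun _ _ => Finset.sum_nonneg fun _ _ => by positivity
    have hY4 : Y ^ 4 ≤ 600 ^ 2 * L ^ 2 * (N ^ 4 * ((D.card : ℝ) ^ 3 * (G.card : ℝ) ^ 3)) :=
      hA.sum_sum_pow_four_le D G
    set T := ((D ×ˢ D).filter fun p => p.1 - p.2 ∈ G) with hT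
    have hTY : t * T.card ≤ Y := by
      have hinj : Set.InjOn (fun p : ℤ × ℤ => (-p.2, p.1 - p.2)) T := by
        rintro ⟨x, y⟩ _ ⟨x', y'⟩ _ h
        simp only [Prod.mk.injEq, neg_inj] at h
        obtain ⟨rfl, h⟩ := h
        simpa using h
      have hsub : T.image (fun p : ℤ × ℤ => (-p.2, p.1 - p.2)) ⊆ D ×ˢ G := by
        intro q hq
        obtain ⟨p, hp, rfl⟩ := Finset.mem_image.1 hq
        obtain ⟨h1, h2⟩ := Finset.mem_filter.1 hp
        exact Finset.mem_product.2 ⟨neg_mem_diffLevel (Finset.mem_product.1 h1).2, h2⟩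
      calc t * T.card = ∑ _p ∈ T, t := by rw [Finset.sum_const, nsmul_eq_mul, mul_comm]
        _ ≤ ∑ p ∈ T, (diffCount A A (p.1 - p.2 - -p.2) : ℝ) := by
            refine Finset.sum_le_sum fun p hp => ?_
            rw [show p.1 - p.2 - -p.2 = p.1 by ring]
            exact pow_le_cast_diffCount (Finset.mem_product.1 (Finset.mem_filter.1 hp).1).1
        _ = ∑ q ∈ T.image (fun p : ℤ × ℤ => (-p.2, p.1 - p.2)),
              (diffCount A A (q.2 - q.1) : ℝ) := by rw [Finset.sum_image hinj]
        _ ≤ ∑ q ∈ D ×ˢ G, (diffCount A A (q.2 - q.1) : ℝ) :=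
            Finset.sum_le_sum_of_subset_of_nonneg hsub fun _ _ _ => by positivity
        _ = Y := by rw [Finset.sum_product]
    have hXT : X ≤ 4 * ρ ^ 2 * T.card := by
      calc X ≤ ∑ _p ∈ T, 4 * ρ ^ 2 := by
            refine Finset.sum_le_sum fun p hp => ?_
            have := diffCount_le_two_mul_pow (Finset.mem_filter.1 hp).2
            calc _ ≤ (2 * ρ) ^ 2 := by gcongr
              _ = _ := by ring
        _ = _ := by rw [Finset.sum_const, nsmul_eq_mul, mul_comm]
    have h1 : t * X ≤ 4 * ρ ^ 2 * Y := by
      calc t * X ≤ t * (4 * ρ ^ 2 * T.card) := by gcongr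
        _ = 4 * ρ ^ 2 * (t * T.card) := by ring
        _ ≤ _ := by gcongr
    calc t ^ 5 * X ^ 4 = t * (t * X) ^ 4 := by ring
      _ ≤ ρ * (4 * ρ ^ 2 * Y) ^ 4 := by gcongr
      _ = 256 * ρ ^ 9 * Y ^ 4 := by ring
      _ ≤ 256 * ρ ^ 9 * (600 ^ 2 * L ^ 2 * (N ^ 4 * ((D.card : ℝ) ^ 3 * (G.card : ℝ) ^ 3))) := by
          gcongr
      _ = 256 * 600 ^ 2 * L ^ 2 * N ^ 4 * (D.card : ℝ) ^ 3 * ((G.card : ℝ) * ρ ^ 3) ^ 3 := by ring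
      _ ≤ 256 * 600 ^ 2 * L ^ 2 * N ^ 4 * (D.card : ℝ) ^ 3 * (75 * N ^ 3) ^ 3 := by gcongr
      _ = _ := by ring

lemma log_diffCount_lt (A : Finset ℤ) (d : ℤ) :
    Nat.log 2 (diffCount A A d) < Nat.log 2 A.card + 1 :=
  Nat.lt_succ_of_le (Nat.log_mono_right (diffCount_le_card_left A A d))

lemma FewPopularDiffs.sum_sq_sub_le {A : Finset ℤ} (hA : FewPopularDiffs A) (j : ℕ) :
    ((2 : ℝ) ^ j) ^ 5 * (∑ s ∈ diffLevel A j, ∑ s' ∈ diffLevel A j,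
        (diffCount A A (s - s') : ℝ) ^ 2) ^ 4 ≤
      256 * 600 ^ 2 * 75 ^ 3 * (Nat.log 2 A.card + 1 : ℕ) ^ 6 *
        ((A.card : ℝ) ^ 13 * ((diffLevel A j).card : ℝ) ^ 3) := by
  set D := diffLevel A j with hD
  set L : ℕ := Nat.log 2 A.card + 1 with hL
  set W := (D ×ˢ D).filter fun p => p.1 - p.2 ∈ A - A with hW
  have e : ∑ s ∈ D, ∑ s' ∈ D, (diffCount A A (s - s') : ℝ) ^ 2 =
      ∑ p ∈ W, (diffCount A A (p.1 - p.2) : ℝ) ^ 2 := by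
    rw [← Finset.sum_product', hW, Finset.sum_filter]
    refine Finset.sum_congr rfl fun p _ => ?_
    split_ifs with h
    · rfl
    · have : diffCount A A (p.1 - p.2) = 0 := by
        by_contra h0
        obtain ⟨b, hb⟩ := Finset.card_pos.1 (Nat.pos_of_ne_zero h0)
        obtain ⟨h1, h2⟩ := Finset.mem_filter.1 hb
        apply h
        have := Finset.sub_mem_sub h2 h1
        rwa [add_sub_cancel_left] at this
      simp [this]
  obtain ⟨i, _, hi⟩ := exists_sum_le_mul_sum_fiber W
    (fun p => (diffCount A A (p.1 - p.2) : ℝ) ^ 2)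
    (fun p => Nat.log 2 (diffCount A A (p.1 - p.2))) (L := L) (Nat.succ_pos _)
    fun p _ => log_diffCount_lt A _
  have hfil : (W.filter fun p => Nat.log 2 (diffCount A A (p.1 - p.2)) = i) =
      (D ×ˢ D).filter fun p => p.1 - p.2 ∈ diffLevel A i := by
    rw [hW, Finset.filter_filter]
    refine Finset.filter_congr fun p _ => ?_
    rw [diffLevel, Finset.mem_filter]
  rw [hfil] at hi
  rw [e]
  calc _ ≤ ((2 : ℝ) ^ j) ^ 5 * (L * ∑ p ∈ D ×ˢ D with p.1 - p.2 ∈ diffLevel A i,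
        (diffCount A A (p.1 - p.2) : ℝ) ^ 2) ^ 4 := by gcongr
    _ = L ^ 4 * (((2 : ℝ) ^ j) ^ 5 * (∑ p ∈ D ×ˢ D with p.1 - p.2 ∈ diffLevel A i,
        (diffCount A A (p.1 - p.2) : ℝ) ^ 2) ^ 4) := by ring
    _ ≤ L ^ 4 * (256 * 600 ^ 2 * 75 ^ 3 * (L : ℝ) ^ 2 * ((A.card : ℝ) ^ 13 * (D.card : ℝ) ^ 3)) := by
        exact mul_le_mul_of_nonneg_left (hA.sum_level_pair_le j i) (by positivity)
    _ = _ := by ring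

lemma energy_bound_of_bounds {E t P W X L N δ : ℝ} (ht : 0 ≤ t) (hP0 : 0 ≤ P) (hW0 : 0 ≤ W)
    (hX0 : 0 ≤ X) (hL : 0 ≤ L) (hN : 0 ≤ N) (htD : t * δ ≤ P) (hPD : P ≤ 2 * t * δ) (hE0 : 0 ≤ E)
    (hE : E ≤ L * (2 * t * P)) (hPW : t * P ^ 3 ≤ N ^ 3 * W)
    (hWX : W ^ 2 ≤ (600 * L * N ^ 3) * X)
    (hX4 : t ^ 5 * X ^ 4 ≤ 256 * 600 ^ 2 * 75 ^ 3 * L ^ 6 * (N ^ 13 * δ ^ 3))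
    (hδt : δ * t ^ 3 ≤ 75 * N ^ 3) (hδ : 0 ≤ δ) :
    E ^ 26 ≤ (2 ^ 26 * 150 ^ 5 * (256 * 600 ^ 6 * 75 ^ 3)) * L ^ 36 * N ^ 64 := by
  have hmain : t ^ 16 * P ^ 24 ≤ (256 * 600 ^ 6 * 75 ^ 3) * L ^ 10 * N ^ 49 * P ^ 3 := by
    calc t ^ 16 * P ^ 24 = t ^ 8 * (t * P ^ 3) ^ 8 := by ring
      _ ≤ t ^ 8 * (N ^ 3 * W) ^ 8 := by gcongr
      _ = t ^ 8 * N ^ 24 * (W ^ 2) ^ 4 := by ring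
      _ ≤ t ^ 8 * N ^ 24 * ((600 * L * N ^ 3) * X) ^ 4 := by gcongr
      _ = 600 ^ 4 * L ^ 4 * N ^ 36 * t ^ 3 * (t ^ 5 * X ^ 4) := by ring
      _ ≤ 600 ^ 4 * L ^ 4 * N ^ 36 * t ^ 3 *
          (256 * 600 ^ 2 * 75 ^ 3 * L ^ 6 * (N ^ 13 * δ ^ 3)) := by gcongr
      _ = (256 * 600 ^ 6 * 75 ^ 3) * L ^ 10 * N ^ 49 * (t * δ) ^ 3 := by ring
      _ ≤ _ := by gcongr
  have ht2P : t ^ 2 * P ≤ 150 * N ^ 3 := by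
    calc t ^ 2 * P ≤ t ^ 2 * (2 * t * δ) := by gcongr
      _ = 2 * (δ * t ^ 3) := by ring
      _ ≤ 2 * (75 * N ^ 3) := by gcongr
      _ = _ := by ring
  have hmain' : t ^ 16 * P ^ 21 ≤ (256 * 600 ^ 6 * 75 ^ 3) * L ^ 10 * N ^ 49 := by
    rcases hP0.eq_or_lt with h | h
    · rw [← h]
      simp only [ne_eq, OfNat.ofNat_ne_zero, not_false_eq_true, zero_pow, mul_zero]
      positivity
    · refine le_of_mul_le_mul_right ?_ (pow_pos h 3)
      calc _ = t ^ 16 * P ^ 24 := by ring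
        _ ≤ _ := hmain
  calc _ ≤ (L * (2 * t * P)) ^ 26 := by gcongr
    _ = 2 ^ 26 * L ^ 26 * (t ^ 16 * P ^ 21) * (t ^ 2 * P) ^ 5 := by ring
    _ ≤ 2 ^ 26 * L ^ 26 * ((256 * 600 ^ 6 * 75 ^ 3) * L ^ 10 * N ^ 49) *
        (150 * N ^ 3) ^ 5 := by gcongr
    _ = _ := by ring

lemma FewPopularDiffs.energy_le {A : Finset ℤ} (hA : FewPopularDiffs A) :
    (∑ d ∈ A - A, (diffCount A A d : ℝ) ^ 2) ^ 26 ≤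
      (2 ^ 26 * 150 ^ 5 * (256 * 600 ^ 6 * 75 ^ 3)) * (Nat.log 2 A.card + 1 : ℕ) ^ 36 *
        (A.card : ℝ) ^ 64 := by
  set L : ℕ := Nat.log 2 A.card + 1 with hL
  obtain ⟨j, _, hj⟩ := exists_sum_le_mul_sum_fiber (A - A)
    (fun d => (diffCount A A d : ℝ) ^ 2) (fun d => Nat.log 2 (diffCount A A d)) (L := L)
    (Nat.succ_pos _) fun d _ => log_diffCount_lt A d
  change _ ≤ L * ∑ d ∈ diffLevel A j, (diffCount A A d : ℝ) ^ 2 at hj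
  set D := diffLevel A j with hD
  set t : ℝ := (2 : ℝ) ^ j with ht
  set N : ℝ := (A.card : ℝ) with hN
  have htpos : 0 < t := by positivity
  set P := ∑ d ∈ D, (diffCount A A d : ℝ) with hP
  have hP0 : 0 ≤ P := Finset.sum_nonneg fun _ _ => by positivity
  have htD : t * D.card ≤ P := by
    calc t * D.card = ∑ _d ∈ D, t := by rw [Finset.sum_const, nsmul_eq_mul, mul_comm]
      _ ≤ P := Finset.sum_le_sum fun d hd => pow_le_cast_diffCount hd
  have hPD : P ≤ 2 * t * D.card := by
    calc P ≤ ∑ _d ∈ D, 2 * t := Finset.sum_le_sum fun d hd => diffCount_le_two_mul_pow hd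
      _ = _ := by rw [Finset.sum_const, nsmul_eq_mul, mul_comm]
  have hE : ∑ d ∈ A - A, (diffCount A A d : ℝ) ^ 2 ≤ L * (2 * t * P) := by
    refine hj.trans ?_
    gcongr
    rw [hP, Finset.mul_sum]
    refine Finset.sum_le_sum fun d hd => ?_
    rw [sq]
    gcongr
    exact diffCount_le_two_mul_pow hd
  set M : ℤ → ℤ → ℝ := fun x y => if x - y ∈ D then 1 else 0 with hM
  have hM0 : ∀ x y, 0 ≤ M x y := fun x y => by simp only [hM]; split_ifs <;> simp
  have hMs : ∀ x y, M x y = M y x := by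
    intro x y
    have : x - y ∈ D ↔ y - x ∈ D :=
      ⟨fun h => by simpa using neg_mem_diffLevel h, fun h => by simpa using neg_mem_diffLevel h⟩
    simp only [hM, this]
  have hPM : ∑ x ∈ A, ∑ y ∈ A, M x y = P := by
    rw [Finset.sum_comm, sum_sum_sub_eq_sum_diffCount A A (A - A) subset_rfl
      fun d => if d ∈ D then (1 : ℝ) else 0]
    simp only [mul_ite, mul_one, mul_zero]
    rw [← Finset.sum_filter, hP]
    congr 1
    ext d
    rw [Finset.mem_filter]
    exact ⟨fun h => h.2, fun h => ⟨(Finset.mem_filter.1 h).1, h⟩⟩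
  have hwalk := sum_pow_three_le_walks A M hM0 hMs
  rw [hPM] at hwalk
  set W := ∑ z ∈ A, ∑ x ∈ A, ∑ y ∈ A, M x z * M y z * diffCount A A (x - y) with hW
  have hW0 : 0 ≤ W := Finset.sum_nonneg fun z _ => Finset.sum_nonneg fun x _ =>
    Finset.sum_nonneg fun y _ => mul_nonneg (mul_nonneg (hM0 _ _) (hM0 _ _)) (by positivity)
  have hwW : t * ∑ x ∈ A, ∑ y ∈ A, M x y * ((∑ z ∈ A, M x z) * ∑ z ∈ A, M y z) ≤ N * W := by
    refine le_trans ?_ (sum_mul_diffCount_sum_le A M)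
    rw [Finset.mul_sum]
    refine Finset.sum_le_sum fun x _ => ?_
    rw [Finset.mul_sum]
    refine Finset.sum_le_sum fun y _ => ?_
    have hn : 0 ≤ (∑ z ∈ A, M x z) * ∑ z ∈ A, M y z :=
      mul_nonneg (Finset.sum_nonneg fun _ _ => hM0 _ _) (Finset.sum_nonneg fun _ _ => hM0 _ _)
    have : t * M x y ≤ diffCount A A (x - y) := by
      simp only [hM]
      split_ifs with h
      · rw [mul_one]
        exact pow_le_cast_diffCount h
      · simp
    calc _ = (t * M x y) * ((∑ z ∈ A, M x z) * ∑ z ∈ A, M y z) := by ring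
      _ ≤ diffCount A A (x - y) * ((∑ z ∈ A, M x z) * ∑ z ∈ A, M y z) := by gcongr
      _ = _ := by ring
  have hPW : t * P ^ 3 ≤ N ^ 3 * W := by
    calc t * P ^ 3 ≤ t * (N ^ 2 * ∑ x ∈ A, ∑ y ∈ A, M x y *
          ((∑ z ∈ A, M x z) * ∑ z ∈ A, M y z)) := by gcongr
      _ = N ^ 2 * (t * ∑ x ∈ A, ∑ y ∈ A, M x y *
          ((∑ z ∈ A, M x z) * ∑ z ∈ A, M y z)) := by ring
      _ ≤ N ^ 2 * (N * W) := by gcongr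
      _ = _ := by ring
  set X := ∑ s ∈ D, ∑ s' ∈ D, (diffCount A A (s - s') : ℝ) ^ 2 with hX
  have hX0 : 0 ≤ X := Finset.sum_nonneg fun _ _ => Finset.sum_nonneg fun _ _ => by positivity
  have hWX : W ^ 2 ≤ (600 * L * N ^ 3) * X := by
    refine (sq_triangles_le A D).trans ?_
    gcongr
    refine (hA.sum_cube_le A (A - A)).trans (le_of_eq ?_)
    ring
  have hX4 : t ^ 5 * X ^ 4 ≤ 256 * 600 ^ 2 * 75 ^ 3 * (L : ℝ) ^ 6 * (N ^ 13 * (D.card : ℝ) ^ 3) :=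
    hA.sum_sq_sub_le j
  refine energy_bound_of_bounds htpos.le hP0 hW0 hX0 (by positivity) (by positivity) htD hPD
    (Finset.sum_nonneg fun _ _ => by positivity) hE hPW hWX hX4
    (hA.card_diffLevel_le j) (by positivity)

/-- The additive character `x ↦ exp (2πix)`. -/
noncomputable def expi (x : ℝ) : ℂ := Complex.exp (2 * Real.pi * x * Complex.I)

lemma expi_add (x y : ℝ) : expi (x + y) = expi x * expi y := by
  rw [expi, expi, expi, ← Complex.exp_add]
  congr 1
  push_cast
  ring

lemma conj_expi (x : ℝ) : conj (expi x) = expi (-x) := by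
  rw [expi, expi, ← Complex.exp_conj]
  congr 1
  simp only [map_mul, Complex.conj_ofReal, Complex.conj_I, map_ofNat]
  push_cast
  ring

lemma norm_expi (x : ℝ) : ‖expi x‖ = 1 := by
  rw [expi, show (2 * Real.pi * x * Complex.I : ℂ) = ((2 * Real.pi * x : ℝ) : ℂ) * Complex.I by
    push_cast; ring, Complex.norm_exp_ofReal_mul_I]

lemma expi_intCast (n : ℤ) : expi n = 1 := by
  rw [expi, Complex.exp_eq_one_iff]
  exact ⟨n, by push_cast; ring⟩

lemma continuous_expi : Continuous expi := by
  unfold expi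
  fun_prop

lemma integral_expi (k : ℤ) (x : ℝ) :
    ∫ α in x..x + 1, expi (k * α) = if k = 0 then 1 else 0 := by
  split_ifs with h
  · subst h
    simp [expi]
  · have hk : (2 * Real.pi * k * Complex.I : ℂ) ≠ 0 := by
      simp [h, Real.pi_ne_zero]
    have e : ∀ α : ℝ, expi (k * α) = Complex.exp ((2 * Real.pi * k * Complex.I : ℂ) * α) := by
      intro α
      rw [expi]
      congr 1
      push_cast
      ring
    simp only [e]
    rw [integral_exp_mul_complex hk, ← e, ← e, mul_add, expi_add, mul_one, expi_intCast]
    simp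

lemma integral_normSq_sum_expi {ι : Type*} (I : Finset ι) (c : ι → ℂ) (k : ι → ℤ) (x : ℝ) :
    ∫ α in x..x + 1, ‖∑ i ∈ I, c i * expi (k i * α)‖ ^ 2 =
      ∑ i ∈ I, ∑ j ∈ I, if k i = k j then (c i * conj (c j)).re else 0 := by
  have h1 : ∀ α : ℝ, ((‖∑ i ∈ I, c i * expi (k i * α)‖ ^ 2 : ℝ) : ℂ) =
      ∑ i ∈ I, ∑ j ∈ I, c i * conj (c j) * expi (((k i - k j : ℤ) : ℝ) * α) := by
    intro α
    rw [← Complex.normSq_eq_norm_sq, Complex.normSq_eq_conj_mul_self, mul_comm, map_sum,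
      Finset.sum_mul_sum]
    refine Finset.sum_congr rfl fun i _ => Finset.sum_congr rfl fun j _ => ?_
    rw [map_mul, conj_expi, show ((k i - k j : ℤ) : ℝ) * α = k i * α + -(k j * α) by
      push_cast; ring, expi_add]
    ring
  have h2 : ((∫ α in x..x + 1, ‖∑ i ∈ I, c i * expi (k i * α)‖ ^ 2 : ℝ) : ℂ) =
      ∑ i ∈ I, ∑ j ∈ I, if k i = k j then c i * conj (c j) else 0 := by
    rw [← intervalIntegral.integral_ofReal]
    simp only [h1]
    have hterm : ∀ (d : ℂ) (n : ℤ),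
        IntervalIntegrable (fun α : ℝ => d * expi (n * α)) volume x (x + 1) :=
      fun d n => (continuous_const.mul
        (continuous_expi.comp (continuous_const.mul continuous_id))).intervalIntegrable _ _
    have hcont : ∀ i, Continuous fun α : ℝ =>
        ∑ j ∈ I, c i * conj (c j) * expi (((k i - k j : ℤ) : ℝ) * α) := fun i =>
      continuous_finsetSum I fun j _ => continuous_const.mul
        (continuous_expi.comp (continuous_const.mul continuous_id))
    rw [intervalIntegral.integral_finsetSum fun i _ => (hcont i).intervalIntegrable _ _]
    refine Finset.sum_congr rfl fun i _ => ?_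
    rw [intervalIntegral.integral_finsetSum fun j _ => hterm _ _]
    refine Finset.sum_congr rfl fun j _ => ?_
    rw [intervalIntegral.integral_const_mul, integral_expi]
    simp only [sub_eq_zero]
    split_ifs <;> simp
  have h3 := congrArg Complex.re h2
  rw [Complex.ofReal_re] at h3
  rw [h3, Complex.re_sum]
  refine Finset.sum_congr rfl fun i _ => ?_
  rw [Complex.re_sum]
  refine Finset.sum_congr rfl fun j _ => ?_
  split_ifs <;> simp

lemma integral_normSq_sum_expi_le {ι : Type*} (I : Finset ι) (c : ι → ℂ) (k : ι → ℤ) (x : ℝ)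
    {K : ℕ} (hK : ∀ i ∈ I, (I.filter fun j => k j = k i).card ≤ K) :
    ∫ α in x..x + 1, ‖∑ i ∈ I, c i * expi (k i * α)‖ ^ 2 ≤ K * ∑ i ∈ I, ‖c i‖ ^ 2 := by
  rw [integral_normSq_sum_expi]
  have h1 : ∀ i j, (c i * conj (c j)).re ≤ ‖c i‖ ^ 2 / 2 + ‖c j‖ ^ 2 / 2 := by
    intro i j
    have := Complex.re_le_norm (c i * conj (c j))
    rw [norm_mul, RCLike.norm_conj] at this
    nlinarith [sq_nonneg (‖c i‖ - ‖c j‖)]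
  have hrow : ∑ i ∈ I, ∑ j ∈ I, (if k i = k j then ‖c i‖ ^ 2 / 2 else 0) ≤
      ∑ i ∈ I, K * (‖c i‖ ^ 2 / 2) := by
    refine Finset.sum_le_sum fun i hi => ?_
    rw [← Finset.sum_filter, Finset.sum_const, nsmul_eq_mul]
    refine mul_le_mul_of_nonneg_right ?_ (by positivity)
    have := hK i hi
    simp only [eq_comm (a := k i)]
    exact_mod_cast this
  have hcol : ∑ i ∈ I, ∑ j ∈ I, (if k i = k j then ‖c j‖ ^ 2 / 2 else 0) =
      ∑ i ∈ I, ∑ j ∈ I, (if k i = k j then ‖c i‖ ^ 2 / 2 else 0) := by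
    rw [Finset.sum_comm]
    refine Finset.sum_congr rfl fun i _ => Finset.sum_congr rfl fun j _ => ?_
    simp only [eq_comm]
  calc _ ≤ ∑ i ∈ I, ∑ j ∈ I, ((if k i = k j then ‖c i‖ ^ 2 / 2 else 0) +
        (if k i = k j then ‖c j‖ ^ 2 / 2 else 0)) := by
        refine Finset.sum_le_sum fun i _ => Finset.sum_le_sum fun j _ => ?_
        split_ifs
        · exact h1 i j
        · simp
    _ ≤ ∑ i ∈ I, K * (‖c i‖ ^ 2 / 2) + ∑ i ∈ I, K * (‖c i‖ ^ 2 / 2) := by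
        simp only [Finset.sum_add_distrib]
        rw [hcol]
        exact add_le_add hrow hrow
    _ = _ := by
        rw [← Finset.mul_sum, ← Finset.sum_div]
        ring

lemma integral_normSq_sum_expi_injOn {ι : Type*} (I : Finset ι) (c : ι → ℂ) (k : ι → ℤ) (x : ℝ)
    (hk : Set.InjOn k I) :
    ∫ α in x..x + 1, ‖∑ i ∈ I, c i * expi (k i * α)‖ ^ 2 = ∑ i ∈ I, ‖c i‖ ^ 2 := by
  classical
  rw [integral_normSq_sum_expi]
  refine Finset.sum_congr rfl fun i hi => ?_
  rw [Finset.sum_eq_single i]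
  · rw [if_pos rfl, Complex.mul_conj, Complex.ofReal_re, Complex.normSq_eq_norm_sq]
  · intro j hj hji
    exact if_neg fun h => hji (hk hj hi h.symm)
  · exact fun h => absurd hi h

/-- The exponential sum with frequencies in `A`. -/
noncomputable def expSum (A : Finset ℤ) (α : ℝ) : ℂ := ∑ n ∈ A, expi (n * α)

lemma continuous_expSum (A : Finset ℤ) : Continuous (expSum A) :=
  continuous_finsetSum _ fun _ _ => continuous_expi.comp (continuous_const.mul continuous_id)

lemma norm_expSum_le (A : Finset ℤ) (α : ℝ) : ‖expSum A α‖ ≤ A.card := by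
  refine (norm_sum_le _ _).trans ?_
  simp [norm_expi]

lemma integral_norm_expSum_sq (A : Finset ℤ) (x : ℝ) :
    ∫ α in x..x + 1, ‖expSum A α‖ ^ 2 = A.card := by
  have := integral_normSq_sum_expi_injOn A (fun _ => 1) (fun n => n) x fun _ _ _ _ h => h
  simpa [expSum] using this

lemma normSq_expSum_eq (A : Finset ℤ) (α : ℝ) :
    ((‖expSum A α‖ ^ 2 : ℝ) : ℂ) = ∑ p ∈ A ×ˢ A, expi ((p.1 - p.2 : ℤ) * α) := by
  rw [← Complex.normSq_eq_norm_sq, Complex.normSq_eq_conj_mul_self, mul_comm, expSum, map_sum,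
    Finset.sum_mul_sum, Finset.sum_product]
  refine Finset.sum_congr rfl fun i _ => Finset.sum_congr rfl fun j _ => ?_
  rw [conj_expi, ← expi_add]
  congr 1
  push_cast
  ring

lemma integral_norm_expSum_pow_four (A : Finset ℤ) (x : ℝ) :
    ∫ α in x..x + 1, ‖expSum A α‖ ^ 4 = ∑ d ∈ A - A, (diffCount A A d : ℝ) ^ 2 := by
  have h := integral_normSq_sum_expi (A ×ˢ A) (fun _ => 1) (fun p => p.1 - p.2) x
  have e : ∀ α : ℝ, ‖∑ p ∈ A ×ˢ A, 1 * expi ((p.1 - p.2 : ℤ) * α)‖ ^ 2 = ‖expSum A α‖ ^ 4 := by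
    intro α
    simp only [one_mul]
    rw [← normSq_expSum_eq, Complex.norm_real, Real.norm_of_nonneg (by positivity)]
    ring
  simp only [e] at h
  rw [h]
  have hg : ∀ d : ℤ, (∑ q ∈ A ×ˢ A, if d = q.1 - q.2 then ((1 : ℂ) * conj (1 : ℂ)).re else 0) =
      (diffCount A A d : ℝ) := by
    intro d
    simp only [map_one, mul_one, Complex.one_re]
    rw [Finset.sum_boole, diffCount]
    norm_cast
    refine Finset.card_bij' (fun q _ => q.2) (fun b _ => (b + d, b)) ?_ ?_ ?_ ?_
    · intro q hq
      obtain ⟨h1, h2⟩ := Finset.mem_filter.1 hq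
      obtain ⟨h3, h4⟩ := Finset.mem_product.1 h1
      exact Finset.mem_filter.2 ⟨h4, by rw [h2]; simpa using h3⟩
    · intro b hb
      obtain ⟨h1, h2⟩ := Finset.mem_filter.1 hb
      exact Finset.mem_filter.2 ⟨Finset.mem_product.2 ⟨h2, h1⟩, by simp⟩
    · intro q hq
      obtain ⟨h1, h2⟩ := Finset.mem_filter.1 hq
      ext
      · simp [h2]
      · rfl
    · intros; rfl
  simp only [hg]
  rw [Finset.sum_product_right, sum_sum_sub_eq_sum_diffCount A A (A - A) subset_rfl
    fun d => (diffCount A A d : ℝ)]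
  exact Finset.sum_congr rfl fun d _ => by ring

/-- `f` is a real trigonometric polynomial of degree at most `Q`. -/
def IsTrigPoly (Q : ℕ) (f : ℝ → ℝ) : Prop :=
  ∃ c : ℤ → ℂ, ∀ α, (f α : ℂ) = ∑ n ∈ Finset.Icc (-(Q : ℤ)) Q, c n * expi (n * α)

lemma IsTrigPoly.of_sum {ι : Type*} (I : Finset ι) (c : ι → ℂ) (k : ι → ℤ) {Q : ℕ} {f : ℝ → ℝ}
    (hk : ∀ i ∈ I, |k i| ≤ Q) (hf : ∀ α, (f α : ℂ) = ∑ i ∈ I, c i * expi (k i * α)) :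
    IsTrigPoly Q f := by
  refine ⟨fun n => ∑ i ∈ I with k i = n, c i, fun α => ?_⟩
  have hmaps : ∀ i ∈ I, k i ∈ Finset.Icc (-(Q : ℤ)) Q := fun i hi =>
    Finset.mem_Icc.2 (abs_le.1 (hk i hi))
  rw [hf, ← Finset.sum_fiberwise_of_maps_to hmaps]
  refine Finset.sum_congr rfl fun n _ => ?_
  rw [Finset.sum_mul]
  refine Finset.sum_congr rfl fun i hi => ?_
  rw [(Finset.mem_filter.1 hi).2]

lemma IsTrigPoly.const (r : ℝ) (Q : ℕ) : IsTrigPoly Q fun _ => r :=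
  .of_sum {()} (fun _ => (r : ℂ)) (fun _ => 0) (by simp) (by simp [expi])

lemma IsTrigPoly.mul {Q R : ℕ} {f g : ℝ → ℝ} (hf : IsTrigPoly Q f) (hg : IsTrigPoly R g) :
    IsTrigPoly (Q + R) fun α => f α * g α := by
  obtain ⟨c, hc⟩ := hf
  obtain ⟨d, hd⟩ := hg
  refine .of_sum (Finset.Icc (-(Q : ℤ)) Q ×ˢ Finset.Icc (-(R : ℤ)) R) (fun p => c p.1 * d p.2)
    (fun p => p.1 + p.2) (fun p hp => ?_) fun α => ?_
  · obtain ⟨h1, h2⟩ := Finset.mem_product.1 hp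
    rw [Finset.mem_Icc] at h1 h2
    rw [abs_le]
    push_cast
    constructor <;> omega
  · rw [Complex.ofReal_mul, hc, hd, Finset.sum_mul_sum, Finset.sum_product]
    refine Finset.sum_congr rfl fun n _ => Finset.sum_congr rfl fun m _ => ?_
    rw [Int.cast_add, add_mul, expi_add]
    ring

lemma IsTrigPoly.one_sub {Q : ℕ} {f : ℝ → ℝ} (hf : IsTrigPoly Q f) :
    IsTrigPoly Q fun α => 1 - f α := by
  obtain ⟨c, hc⟩ := hf
  refine ⟨fun n => (if n = 0 then 1 else 0) - c n, fun α => ?_⟩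
  simp only [sub_mul, Finset.sum_sub_distrib, ite_mul, one_mul, zero_mul, Finset.sum_ite_eq']
  rw [if_pos (by simp), ← hc]
  simp [expi]

lemma IsTrigPoly.pow {Q : ℕ} {f : ℝ → ℝ} (hf : IsTrigPoly Q f) (k : ℕ) :
    IsTrigPoly (Q * k) fun α => f α ^ k := by
  induction k with
  | zero => simpa using IsTrigPoly.const 1 0
  | succ k ih => simpa only [pow_succ, Nat.mul_succ] using ih.mul hf

lemma IsTrigPoly.continuous {Q : ℕ} {f : ℝ → ℝ} (hf : IsTrigPoly Q f) : Continuous f := by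
  obtain ⟨c, hc⟩ := hf
  have h : f = fun α => (∑ n ∈ Finset.Icc (-(Q : ℤ)) Q, c n * expi (n * α)).re := by
    funext α
    rw [← hc, Complex.ofReal_re]
  rw [h]
  exact Complex.continuous_re.comp (continuous_finsetSum _ fun _ _ => continuous_const.mul
    (continuous_expi.comp (continuous_const.mul continuous_id)))

lemma isTrigPoly_norm_expSum_sq_div {A : Finset ℤ} {Q : ℕ} (hA : ∀ n ∈ A, 0 ≤ n ∧ n ≤ Q) (s : ℝ) :
    IsTrigPoly Q fun α => ‖expSum A α‖ ^ 2 / s := by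
  refine .of_sum (A ×ˢ A) (fun _ => (1 / s : ℂ)) (fun p => p.1 - p.2) (fun p hp => ?_) fun α => ?_
  · obtain ⟨h1, h2⟩ := Finset.mem_product.1 hp
    have h3 := hA _ h1
    have h4 := hA _ h2
    rw [abs_le]
    constructor <;> omega
  · rw [← Finset.mul_sum, ← normSq_expSum_eq]
    push_cast
    ring

lemma card_filter_dvd_le_log {P : Finset ℕ} (hP : ∀ p ∈ P, p.Prime) {n M : ℕ} (hn : n ≠ 0)
    (hM : n ≤ M) : (P.filter fun p => p ∣ n).card ≤ Nat.log 2 M := by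
  have h1 : ∏ p ∈ P with p ∣ n, p ∣ n :=
    Finset.prod_primes_dvd n (fun p hp => (hP p (Finset.mem_filter.1 hp).1).prime)
      fun p hp => (Finset.mem_filter.1 hp).2
  have h2 : 2 ^ (P.filter fun p => p ∣ n).card ≤ ∏ p ∈ P with p ∣ n, p :=
    Finset.pow_card_le_prod _ _ _ fun p hp => (hP p (Finset.mem_filter.1 hp).1).two_le
  exact Nat.le_log_of_pow_le (by norm_num)
    ((h2.trans (Nat.le_of_dvd (Nat.pos_of_ne_zero hn) h1)).trans hM)

lemma IsTrigPoly.integral_sq_sum_dilates_sub_le {Q H : ℕ} {f : ℝ → ℝ} (hf : IsTrigPoly Q f)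
    (x : ℝ) {P : Finset ℕ} (hP : ∀ p ∈ P, p.Prime ∧ p ≤ H) :
    ∫ α in x..x + 1, (∑ p ∈ P, f (p * α) - P.card * ∫ β in x..x + 1, f β) ^ 2 ≤
      Nat.log 2 (H * Q) * (P.card * ∫ β in x..x + 1, f β ^ 2) := by
  obtain ⟨c, hc⟩ := id hf
  set J := Finset.Icc (-(Q : ℤ)) Q with hJ
  have hmean : ((∫ β in x..x + 1, f β : ℝ) : ℂ) = c 0 := by
    rw [← intervalIntegral.integral_ofReal]
    simp only [hc]
    have hcont : ∀ n, Continuous fun α : ℝ => c n * expi (n * α) := fun n =>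
      continuous_const.mul (continuous_expi.comp (continuous_const.mul continuous_id))
    rw [intervalIntegral.integral_finsetSum fun n _ => (hcont n).intervalIntegrable _ _]
    simp only [intervalIntegral.integral_const_mul, integral_expi]
    simp [hJ]
  have hsq : ∫ β in x..x + 1, f β ^ 2 = ∑ n ∈ J, ‖c n‖ ^ 2 := by
    rw [← integral_normSq_sum_expi_injOn J c (fun n => n) x fun _ _ _ _ h => h]
    refine intervalIntegral.integral_congr fun β _ => ?_
    simp only [← hc, Complex.norm_real, Real.norm_eq_abs, sq_abs]
  have hexp : ∀ α, (∑ p ∈ P, f (p * α) - P.card * ∫ β in x..x + 1, f β) ^ 2 =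
      ‖∑ q ∈ P ×ˢ J.erase 0, c q.2 * expi ((q.1 * q.2 : ℤ) * α)‖ ^ 2 := by
    intro α
    have h : ((∑ p ∈ P, f (p * α) - P.card * ∫ β in x..x + 1, f β : ℝ) : ℂ) =
        ∑ q ∈ P ×ˢ J.erase 0, c q.2 * expi ((q.1 * q.2 : ℤ) * α) := by
      push_cast
      rw [hmean, Finset.sum_product, ← nsmul_eq_mul, ← Finset.sum_const, ← Finset.sum_sub_distrib]
      refine Finset.sum_congr rfl fun p _ => ?_
      rw [hc, ← Finset.add_sum_erase J _ (show (0 : ℤ) ∈ J by simp [hJ])]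
      simp only [Int.cast_zero, zero_mul]
      rw [show expi 0 = 1 by simp [expi], mul_one, add_sub_cancel_left]
      refine Finset.sum_congr rfl fun n _ => ?_
      congr 2
      ring
    rw [← h, Complex.norm_real, Real.norm_eq_abs, sq_abs]
  simp only [hexp]
  refine (integral_normSq_sum_expi_le (K := Nat.log 2 (H * Q)) _ _ _ _ ?_).trans ?_
  · rintro ⟨p, n⟩ hq
    obtain ⟨hp, hn⟩ := Finset.mem_product.1 hq
    obtain ⟨hn0, hnJ⟩ := Finset.mem_erase.1 hn
    have hpp := hP p hp
    have hnQ : n.natAbs ≤ Q := by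
      rw [hJ, Finset.mem_Icc] at hnJ
      omega
    refine le_trans (Finset.card_le_card_of_injOn Prod.fst (t := P.filter fun p' => p' ∣ p * n.natAbs)
      ?_ ?_) (card_filter_dvd_le_log (fun p hp => (hP p hp).1) (n := p * n.natAbs)
        (mul_ne_zero hpp.1.ne_zero (Int.natAbs_ne_zero.2 hn0)) (Nat.mul_le_mul hpp.2 hnQ))
    · rintro ⟨p', n'⟩ hq'
      obtain ⟨h1, h2⟩ := Finset.mem_filter.1 hq'
      refine Finset.mem_coe.2 (Finset.mem_filter.2 ⟨(Finset.mem_product.1 h1).1, ?_⟩)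
      have h3 := congrArg Int.natAbs h2
      simp only [Int.natAbs_mul, Int.natAbs_natCast] at h3
      exact ⟨_, h3.symm⟩
    · rintro ⟨p', n'⟩ hq' ⟨p'', n''⟩ hq'' (rfl : p' = p'')
      obtain ⟨h1, h2⟩ := Finset.mem_filter.1 hq'
      obtain ⟨h3, h4⟩ := Finset.mem_filter.1 hq''
      have h5 : (p' : ℤ) ≠ 0 := by exact_mod_cast (hP p' (Finset.mem_product.1 h1).1).1.ne_zero
      exact Prod.ext rfl (mul_left_cancel₀ h5 (h2.trans h4.symm))
  · rw [hsq, Finset.sum_product]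
    simp only [Finset.sum_const, nsmul_eq_mul]
    gcongr
    exact Finset.erase_subset _ _

lemma IsTrigPoly.measureReal_forall_dilate_lt_le {Q H : ℕ} {f : ℝ → ℝ} (hf : IsTrigPoly Q f)
    (h0 : ∀ α, 0 ≤ f α) (h1 : ∀ α, f α ≤ 1) (x : ℝ) {m : ℝ} (hm : m = ∫ β in x..x + 1, f β)
    (hmpos : 0 < m) {P : Finset ℕ} (hP : ∀ p ∈ P, p.Prime ∧ p ≤ H) (hPne : P.Nonempty) :
    volume.real {α ∈ Set.Ioc x (x + 1) | ∀ p ∈ P, f (p * α) < m / 2} ≤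
      4 * Nat.log 2 (H * Q) / (P.card * m) := by
  set B := {α ∈ Set.Ioc x (x + 1) | ∀ p ∈ P, f (p * α) < m / 2} with hB
  have hcard : (0 : ℝ) < P.card := by exact_mod_cast hPne.card_pos
  set g : ℝ → ℝ := fun α => (∑ p ∈ P, f (p * α) - P.card * m) ^ 2 with hg
  have hgc : Continuous g := by
    have := hf.continuous
    rw [hg]
    refine ((continuous_finsetSum _ fun p _ => this.comp (continuous_const.mul continuous_id)).sub
      continuous_const).pow 2
  have hgi : ∫ α in Set.Ioc x (x + 1), g α ≤ Nat.log 2 (H * Q) * (P.card * m) := by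
    have h2 := hf.integral_sq_sum_dilates_sub_le x hP
    rw [← hm, intervalIntegral.integral_of_le (by linarith)] at h2
    refine h2.trans ?_
    gcongr
    rw [hm]
    refine intervalIntegral.integral_mono_on (by linarith)
      ((hf.continuous.pow 2).intervalIntegrable _ _) (hf.continuous.intervalIntegrable _ _)
      fun α _ => ?_
    nlinarith [h0 α, h1 α]
  have hmarkov := mul_meas_ge_le_integral_of_nonneg (μ := volume.restrict (Set.Ioc x (x + 1)))
    (f := g) (ae_of_all _ fun α => sq_nonneg _)
    (hgc.integrableOn_Ioc) ((P.card * m / 2) ^ 2)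
  have hsub : B ⊆ {α | (P.card * m / 2) ^ 2 ≤ g α} ∩ Set.Ioc x (x + 1) := by
    rintro α ⟨hα, hlt⟩
    refine ⟨?_, hα⟩
    have h3 : ∑ p ∈ P, f (p * α) ≤ ∑ p ∈ P, m / 2 := Finset.sum_le_sum fun p hp => (hlt p hp).le
    rw [Finset.sum_const, nsmul_eq_mul] at h3
    show (P.card * m / 2) ^ 2 ≤ (∑ p ∈ P, f (p * α) - P.card * m) ^ 2
    nlinarith [mul_pos hcard hmpos]
  have hBle : volume.real B ≤
      (volume.restrict (Set.Ioc x (x + 1))).real {α | (P.card * m / 2) ^ 2 ≤ g α} := by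
    rw [measureReal_restrict_apply (measurableSet_le measurable_const hgc.measurable)]
    refine measureReal_mono hsub (ne_top_of_le_ne_top ?_ (measure_mono Set.inter_subset_right))
    simp
  rw [le_div_iff₀ (mul_pos hcard hmpos)]
  have hpos : 0 < P.card * m := mul_pos hcard hmpos
  have h4 : (P.card * m / 2) ^ 2 * volume.real B ≤ Nat.log 2 (H * Q) * (P.card * m) :=
    ((mul_le_mul_of_nonneg_left hBle (sq_nonneg _)).trans hmarkov).trans hgi
  have h5 : (P.card * m) * (volume.real B * (P.card * m)) ≤
      (P.card * m) * (4 * Nat.log 2 (H * Q)) := by nlinarith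
  exact le_of_mul_le_mul_left h5 hpos

lemma abs_card_sub_le_mul_starDisc {N : ℕ} (hN : 0 < N) {x : ℕ → ℝ} {β : ℝ}
    (hβ : β ∈ Set.Ioc (0 : ℝ) 1) :
    |(((Finset.Icc 1 N).filter fun n => 0 ≤ x n ∧ x n < β).card : ℝ) - N * β| ≤
      N * starDisc N x := by
  have hN' : (0 : ℝ) < N := by exact_mod_cast hN
  have hbdd : BddAbove (Set.range fun β : Set.Ioc (0:ℝ) 1 =>
      |(((Finset.Icc 1 N).filter fun n => 0 ≤ x n ∧ x n < (β : ℝ)).card : ℝ) / N - (β : ℝ)|) := by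
    refine ⟨1, ?_⟩
    rintro _ ⟨⟨b, hb0, hb1⟩, rfl⟩
    have h1 : (((Finset.Icc 1 N).filter fun n => 0 ≤ x n ∧ x n < b).card : ℝ) ≤ N := by
      have := Finset.card_filter_le (Finset.Icc 1 N) fun n => 0 ≤ x n ∧ x n < b
      rw [Nat.card_Icc, Nat.add_sub_cancel] at this
      exact_mod_cast this
    have h2 := (div_le_one hN').2 h1
    have h3 : (0 : ℝ) ≤ (((Finset.Icc 1 N).filter fun n => 0 ≤ x n ∧ x n < b).card : ℝ) / N := by
      positivity
    simp only
    rw [abs_le]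
    constructor <;> linarith
  have h := le_ciSup hbdd ⟨β, hβ⟩
  rw [← abs_of_pos hN', starDisc, abs_of_pos hN']
  refine le_trans (le_of_eq ?_) (mul_le_mul_of_nonneg_left h hN'.le)
  nth_rewrite 2 [← abs_of_pos hN']
  rw [← abs_mul]
  congr 1
  field_simp

lemma hasDerivAt_expi (h : ℕ) (β : ℝ) :
    HasDerivAt (fun β : ℝ => expi (h * β)) (2 * Real.pi * h * Complex.I * expi (h * β)) β := by
  have h1 : HasDerivAt (fun β : ℝ => (2 * Real.pi * h * Complex.I * (β : ℂ) : ℂ))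
      (2 * Real.pi * h * Complex.I * 1) β :=
    (Complex.ofRealCLM.hasDerivAt (x := β)).const_mul _
  have h2 := h1.cexp
  have e : ∀ β : ℝ, expi (h * β) = Complex.exp (2 * Real.pi * h * Complex.I * (β : ℂ)) := by
    intro β
    rw [expi]
    congr 1
    push_cast
    ring
  simp only [e]
  convert h2 using 1
  ring

lemma integral_deriv_expi (h : ℕ) (y z : ℝ) :
    ∫ β in y..z, 2 * Real.pi * h * Complex.I * expi (h * β) = expi (h * z) - expi (h * y) :=
  intervalIntegral.integral_eq_sub_of_hasDerivAt (fun β _ => hasDerivAt_expi h β)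
    ((continuous_const.mul
      (continuous_expi.comp (continuous_const.mul continuous_id))).intervalIntegrable _ _)

lemma expi_natCast (n : ℕ) : expi n = 1 := by
  simpa using expi_intCast n

lemma integral_mul_deriv_expi {h : ℕ} (hh : h ≠ 0) :
    ∫ β in (0 : ℝ)..1, (β : ℂ) * (2 * Real.pi * h * Complex.I * expi (h * β)) = 1 := by
  have hc : Continuous fun β : ℝ => expi (h * β) :=
    continuous_expi.comp (continuous_const.mul continuous_id)
  rw [intervalIntegral.integral_mul_deriv_eq_deriv_mul (u := fun β : ℝ => (β : ℂ))
    (u' := fun _ => 1) (fun β _ => Complex.ofRealCLM.hasDerivAt (x := β)) (fun β _ => hasDerivAt_expi h β)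
    (continuous_const.intervalIntegrable _ _) ((continuous_const.mul hc).intervalIntegrable _ _)]
  have h0 := integral_expi h 0
  simp only [zero_add, Int.cast_natCast, Nat.cast_eq_zero, hh, if_false] at h0
  simp [h0, expi_natCast]

lemma expi_eq_one_sub_integral (h : ℕ) {x : ℝ} (hx : x ∈ Set.Ico (0 : ℝ) 1) :
    expi (h * x) = 1 - ∫ β in (0 : ℝ)..1,
      (if x < β then 1 else 0 : ℂ) * (2 * Real.pi * h * Complex.I * expi (h * β)) := by
  have h1 := integral_deriv_expi h x 1
  rw [mul_one, expi_natCast] at h1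
  have h2 : ∫ β in (0 : ℝ)..1,
      (if x < β then 1 else 0 : ℂ) * (2 * Real.pi * h * Complex.I * expi (h * β)) =
      ∫ β in x..1, 2 * Real.pi * h * Complex.I * expi (h * β) := by
    rw [intervalIntegral.integral_of_le zero_le_one, intervalIntegral.integral_of_le hx.2.le]
    have : Set.Ioc x 1 = Set.Ioi x ∩ Set.Ioc 0 1 := by
      ext β
      simp only [Set.mem_Ioc, Set.mem_inter_iff, Set.mem_Ioi]
      exact ⟨fun ⟨h, h'⟩ => ⟨h, hx.1.trans_lt h, h'⟩, fun ⟨h, _, h'⟩ => ⟨h, h'⟩⟩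
    rw [this, ← Measure.restrict_restrict measurableSet_Ioi, ← integral_indicator measurableSet_Ioi]
    congr 1
    funext β
    by_cases hβ : x < β <;> simp [Set.indicator, hβ]
  rw [h2, h1]
  ring

/-- Koksma's inequality for additive characters. -/
lemma norm_sum_expi_le_mul_starDisc {N h : ℕ} (hN : 0 < N) (hh : h ≠ 0) {x : ℕ → ℝ}
    (hx : ∀ n, x n ∈ Set.Ico (0 : ℝ) 1) :
    ‖∑ n ∈ Finset.Icc 1 N, expi (h * x n)‖ ≤ 2 * Real.pi * h * (N * starDisc N x) := by
  have hc : Continuous fun β : ℝ => 2 * Real.pi * h * Complex.I * expi (h * β) :=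
    continuous_const.mul (continuous_expi.comp (continuous_const.mul continuous_id))
  have hi1 : ∀ n, IntervalIntegrable (fun β : ℝ => (if x n < β then 1 else 0 : ℂ) *
      (2 * Real.pi * h * Complex.I * expi (h * β))) volume 0 1 := by
    intro n
    have := (hc.intervalIntegrable 0 1 (μ := volume))
    rw [intervalIntegrable_iff] at this ⊢
    refine (this.indicator (measurableSet_Ioi (a := x n))).congr (ae_of_all _ fun β => ?_)
    by_cases hβ : x n < β <;> simp [Set.indicator, hβ]
  have hi2 : IntervalIntegrable (fun β : ℝ => (N : ℂ) * ((β : ℂ) *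
      (2 * Real.pi * h * Complex.I * expi (h * β)))) volume 0 1 :=
    (continuous_const.mul (Complex.continuous_ofReal.mul hc)).intervalIntegrable _ _
  have key : ∑ n ∈ Finset.Icc 1 N, expi (h * x n) =
      ∫ β in (0 : ℝ)..1, ((N * β - ((Finset.Icc 1 N).filter
        fun n => 0 ≤ x n ∧ x n < β).card : ℝ) : ℂ) *
          (2 * Real.pi * h * Complex.I * expi (h * β)) := by
    rw [Finset.sum_congr rfl fun n _ => expi_eq_one_sub_integral h (hx n), Finset.sum_sub_distrib,
      ← intervalIntegral.integral_finsetSum fun n _ => hi1 n]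
    have h1 : ∑ n ∈ Finset.Icc 1 N, (1 : ℂ) = ∫ β in (0 : ℝ)..1, (N : ℂ) * ((β : ℂ) *
        (2 * Real.pi * h * Complex.I * expi (h * β))) := by
      rw [intervalIntegral.integral_const_mul, integral_mul_deriv_expi hh]
      simp
    have hi3 : IntervalIntegrable (fun β : ℝ => ∑ n ∈ Finset.Icc 1 N,
        (if x n < β then 1 else 0 : ℂ) * (2 * Real.pi * h * Complex.I * expi (h * β)))
        volume 0 1 := by
      have := IntervalIntegrable.sum (Finset.Icc 1 N) fun n _ => hi1 n
      rw [Finset.sum_fn] at this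
      exact this
    rw [h1, ← intervalIntegral.integral_sub hi2 hi3]
    refine intervalIntegral.integral_congr fun β _ => ?_
    simp only [(hx _).1, true_and]
    rw [← Finset.sum_mul, Finset.sum_boole]
    push_cast
    ring
  rw [key]
  have hbound : ∀ β ∈ Set.uIoc (0 : ℝ) 1, ‖((N * β - ((Finset.Icc 1 N).filter
        fun n => 0 ≤ x n ∧ x n < β).card : ℝ) : ℂ) *
          (2 * Real.pi * h * Complex.I * expi (h * β))‖ ≤
      2 * Real.pi * h * (N * starDisc N x) := by
    intro β hβ
    rw [Set.uIoc_of_le zero_le_one] at hβ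
    rw [norm_mul, Complex.norm_real, Real.norm_eq_abs, abs_sub_comm, mul_comm]
    have hnorm : ‖(2 * Real.pi * h * Complex.I * expi (h * β) : ℂ)‖ = 2 * Real.pi * h := by
      simp [norm_expi, Real.pi_pos.le]
    rw [hnorm]
    exact mul_le_mul_of_nonneg_left (abs_card_sub_le_mul_starDisc hN hβ) (by positivity)
  simpa using intervalIntegral.norm_integral_le_of_norm_le_const hbound

lemma expi_mul_fract (h : ℕ) (t : ℝ) : expi (h * Int.fract t) = expi (h * t) := by
  have e : (h : ℝ) * t = h * Int.fract t + ((h * ⌊t⌋ : ℤ) : ℝ) := by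
    push_cast
    rw [← mul_add, Int.fract_add_floor]
  rw [e, expi_add, expi_intCast, mul_one]

/-- The points of `(x, x + 1]` at which `‖expSum A‖` has dyadic size `2 ^ j`. -/
def dyadicLevel (A : Finset ℤ) (x : ℝ) (j : ℕ) : Set ℝ :=
  {α | 2 ^ j ≤ ‖expSum A α‖ ∧ ‖expSum A α‖ < 2 ^ (j + 1)} ∩ Set.Ioc x (x + 1)

lemma measurableSet_dyadic (A : Finset ℤ) (j : ℕ) :
    MeasurableSet {α | 2 ^ j ≤ ‖expSum A α‖ ∧ ‖expSum A α‖ < 2 ^ (j + 1)} :=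
  (measurableSet_le measurable_const (continuous_expSum A).norm.measurable).inter
    (measurableSet_lt (continuous_expSum A).norm.measurable measurable_const)

lemma sq_le_one_add_sum_dyadic {s : ℝ} (hs : 0 ≤ s) {L : ℕ} (hL : s < 2 ^ L) :
    s ^ 2 ≤ 1 + ∑ j ∈ Finset.range L, 4 * 4 ^ j * if 2 ^ j ≤ s ∧ s < 2 ^ (j + 1) then 1 else 0 := by
  have hnn : ∀ j ∈ Finset.range L,
      0 ≤ 4 * 4 ^ j * (if 2 ^ j ≤ s ∧ s < 2 ^ (j + 1) then 1 else 0 : ℝ) := by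
    intro j _
    positivity
  rcases lt_or_ge s 1 with h | h
  · have := Finset.sum_nonneg hnn
    nlinarith
  · obtain ⟨j, hj⟩ := exists_nat_pow_near h one_lt_two
    have hjL : j < L := (pow_lt_pow_iff_right₀ one_lt_two).1 (hj.1.trans_lt hL)
    have h2 := Finset.single_le_sum hnn (Finset.mem_range.2 hjL)
    simp only [if_pos hj] at h2
    have h3 : s ^ 2 ≤ (2 ^ (j + 1)) ^ 2 := by
      gcongr
      exact hj.2.le
    have h4 : ((2 : ℝ) ^ (j + 1)) ^ 2 = 4 * 4 ^ j := by
      rw [← pow_mul, mul_comm, pow_mul, pow_succ]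
      norm_num
      ring
    linarith

lemma sum_dyadic_le_pow_four (s : ℝ) (L : ℕ) :
    ∑ j ∈ Finset.range L, 16 ^ j * (if 2 ^ j ≤ s ∧ s < 2 ^ (j + 1) then 1 else 0 : ℝ) ≤ s ^ 4 := by
  by_cases h : ∃ j ∈ Finset.range L, 2 ^ j ≤ s ∧ s < 2 ^ (j + 1)
  · obtain ⟨j, hjL, hj⟩ := h
    rw [Finset.sum_eq_single_of_mem j hjL]
    · rw [if_pos hj, mul_one, show (16 : ℝ) ^ j = (2 ^ j) ^ 4 by
        rw [← pow_mul, mul_comm, pow_mul]; norm_num]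
      gcongr
      exact hj.1
    · intro i _ hij
      rw [if_neg, mul_zero]
      rintro ⟨h1, h2⟩
      have h3 := (pow_lt_pow_iff_right₀ (one_lt_two (α := ℝ))).1 (h1.trans_lt hj.2)
      have h4 := (pow_lt_pow_iff_right₀ (one_lt_two (α := ℝ))).1 (hj.1.trans_lt h2)
      omega
  · push Not at h
    rw [Finset.sum_eq_zero]
    · positivity
    · intro j hj
      rw [if_neg fun h' => absurd (h j hj h'.1) (not_le.2 h'.2), mul_zero]

lemma integral_ite_dyadic (A : Finset ℤ) (x : ℝ) (j : ℕ) :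
    ∫ α in x..x + 1, (if 2 ^ j ≤ ‖expSum A α‖ ∧ ‖expSum A α‖ < 2 ^ (j + 1) then 1 else 0 : ℝ) =
      volume.real (dyadicLevel A x j) := by
  rw [intervalIntegral.integral_of_le (by linarith), dyadicLevel,
    ← measureReal_restrict_apply (measurableSet_dyadic A j),
    ← integral_indicator_one (measurableSet_dyadic A j)]
  congr 1
  funext α
  simp [Set.indicator]

lemma intervalIntegrable_ite_dyadic (A : Finset ℤ) (x : ℝ) (j : ℕ) :
    IntervalIntegrable (fun α => (if 2 ^ j ≤ ‖expSum A α‖ ∧ ‖expSum A α‖ < 2 ^ (j + 1)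
      then 1 else 0 : ℝ)) volume x (x + 1) := by
  have h : IntervalIntegrable (fun _ : ℝ => (1 : ℝ)) volume x (x + 1) :=
    continuous_const.intervalIntegrable _ _
  rw [intervalIntegrable_iff] at h ⊢
  refine (h.indicator (measurableSet_dyadic A j)).congr (ae_of_all _ fun α => ?_)
  simp [Set.indicator]

lemma exists_large_dyadicLevel {A : Finset ℤ} (hA : 2 ≤ A.card) (x : ℝ) {L : ℕ}
    (hL : A.card < 2 ^ L) :
    ∃ j < L, (A.card : ℝ) ^ 3 ≤ 4096 * (∑ d ∈ A - A, (diffCount A A d : ℝ) ^ 2) * L ^ 2 *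
      (2 ^ j * volume.real (dyadicLevel A x j)) ^ 2 := by
  set N := (A.card : ℝ) with hN
  set E := ∑ d ∈ A - A, (diffCount A A d : ℝ) ^ 2 with hE
  set g : ℕ → ℝ := fun j => volume.real (dyadicLevel A x j) with hg
  have hN2 : 2 ≤ N := by rw [hN]; exact_mod_cast hA
  have hg0 : ∀ j, 0 ≤ g j := fun j => measureReal_nonneg
  have hmono : ∀ α, ‖expSum A α‖ < 2 ^ L := fun α =>
    (norm_expSum_le A α).trans_lt (by exact_mod_cast hL)
  have hi := intervalIntegrable_ite_dyadic A x
  have h2 : N ≤ 1 + ∑ j ∈ Finset.range L, 4 * 4 ^ j * g j := by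
    rw [hN, ← integral_norm_expSum_sq A x]
    have hs : IntervalIntegrable (fun α => ∑ j ∈ Finset.range L, 4 * 4 ^ j *
        (if 2 ^ j ≤ ‖expSum A α‖ ∧ ‖expSum A α‖ < 2 ^ (j + 1) then 1 else 0 : ℝ))
        volume x (x + 1) := by
      have := IntervalIntegrable.sum (Finset.range L) fun j _ => (hi j).const_mul (4 * 4 ^ j)
      rw [Finset.sum_fn] at this
      exact this
    refine (intervalIntegral.integral_mono_on (by linarith)
      (((continuous_expSum A).norm.pow 2).intervalIntegrable _ _)
      ((continuous_const.intervalIntegrable _ _).add hs)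
      fun α _ => sq_le_one_add_sum_dyadic (norm_nonneg _) (hmono α)).trans (le_of_eq ?_)
    rw [intervalIntegral.integral_add (continuous_const.intervalIntegrable _ _) hs,
      intervalIntegral.integral_finsetSum fun j _ => (hi j).const_mul _]
    simp only [intervalIntegral.integral_const_mul, integral_ite_dyadic]
    simp [hg]
  have h4 : ∑ j ∈ Finset.range L, 16 ^ j * g j ≤ E := by
    rw [hE, ← integral_norm_expSum_pow_four A x]
    have hs : IntervalIntegrable (fun α => ∑ j ∈ Finset.range L, 16 ^ j *
        (if 2 ^ j ≤ ‖expSum A α‖ ∧ ‖expSum A α‖ < 2 ^ (j + 1) then 1 else 0 : ℝ))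
        volume x (x + 1) := by
      have := IntervalIntegrable.sum (Finset.range L) fun j _ => (hi j).const_mul (16 ^ j)
      rw [Finset.sum_fn] at this
      exact this
    refine (le_of_eq ?_).trans (intervalIntegral.integral_mono_on (by linarith) hs
      (((continuous_expSum A).norm.pow 4).intervalIntegrable _ _)
      fun α _ => sum_dyadic_le_pow_four _ L)
    rw [intervalIntegral.integral_finsetSum fun j _ => (hi j).const_mul _]
    simp only [intervalIntegral.integral_const_mul, integral_ite_dyadic]
    simp [hg]
  have hL0 : 0 < L := by
    rcases Nat.eq_zero_or_pos L with h | h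
    · subst h
      simp only [pow_zero] at hL
      omega
    · exact h
  have hLr : (0 : ℝ) < L := by exact_mod_cast hL0
  by_contra hcon
  push Not at hcon
  have hE0 : 0 ≤ E := Finset.sum_nonneg fun d _ => by positivity
  rcases hE0.eq_or_lt with hEz | hEpos
  · have hz : ∀ j ∈ Finset.range L, g j = 0 := by
      intro j hj
      have := (Finset.sum_eq_zero_iff_of_nonneg fun j _ =>
        mul_nonneg (by positivity) (hg0 j)).1 (le_antisymm (h4.trans hEz.ge)
          (Finset.sum_nonneg fun j _ => mul_nonneg (by positivity) (hg0 j))) j hj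
      simpa using this
    rw [Finset.sum_eq_zero fun j hj => by rw [hz j hj, mul_zero]] at h2
    linarith
  have hterm : ∀ j ∈ Finset.range L,
      4 ^ j * g j < N / (16 * L) + N / (16 * E) * (16 ^ j * g j) := by
    intro j hj
    have hc := hcon j (Finset.mem_range.1 hj)
    have e16 : (16 : ℝ) ^ j = 4 ^ j * 4 ^ j := by rw [← mul_pow]; norm_num
    have e4 : ((2 : ℝ) ^ j * g j) ^ 2 = 4 ^ j * g j ^ 2 := by
      rw [mul_pow, ← pow_mul, mul_comm j 2, pow_mul]
      norm_num
    have e4' : ((2 : ℝ) ^ j * volume.real (dyadicLevel A x j)) ^ 2 = 4 ^ j * g j ^ 2 := e4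
    rw [e4'] at hc
    rw [e16]
    have h4j : (0 : ℝ) < 4 ^ j := by positivity
    set f : ℝ := 4 ^ j
    have hgj := hg0 j
    rcases le_or_gt (16 * E) (f * N) with h | h
    · have h5 : 1 ≤ N / (16 * E) * f := by
        rw [div_mul_eq_mul_div, le_div_iff₀ (by positivity)]
        linarith
      have h6 : 0 < N / (16 * L) := by positivity
      nlinarith [mul_nonneg h4j.le hgj]
    · have h6 : f * g j < N / (16 * L) := by
        rw [lt_div_iff₀ (by positivity)]
        by_contra hge
        push Not at hge
        have h7 : N ^ 2 ≤ (f * g j * (16 * L)) ^ 2 := by gcongr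
        have h8 : N ^ 2 * N ≤ (f * g j * (16 * L)) ^ 2 * N := by gcongr
        have h9 : (f * g j * (16 * L)) ^ 2 * N = (256 * L ^ 2 * g j ^ 2 * f) * (f * N) := by ring
        have h10 : (256 * L ^ 2 * g j ^ 2 * f) * (f * N) ≤
            (256 * L ^ 2 * g j ^ 2 * f) * (16 * E) := by gcongr
        nlinarith
      have : 0 ≤ N / (16 * E) * (f * f * g j) := by positivity
      linarith
  have hsum := Finset.sum_lt_sum_of_nonempty (Finset.nonempty_range_iff.2 hL0.ne') hterm
  rw [Finset.sum_add_distrib, ← Finset.mul_sum, Finset.sum_const, Finset.card_range,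
    nsmul_eq_mul] at hsum
  have h11 : N / (16 * E) * ∑ j ∈ Finset.range L, 16 ^ j * g j ≤ N / 16 := by
    calc _ ≤ N / (16 * E) * E := by gcongr
      _ = N / 16 := by field_simp
  have h12 : (L : ℝ) * (N / (16 * L)) = N / 16 := by field_simp
  have h13 : ∑ j ∈ Finset.range L, 4 * 4 ^ j * g j = 4 * ∑ j ∈ Finset.range L, 4 ^ j * g j := by
    rw [Finset.mul_sum]
    exact Finset.sum_congr rfl fun j _ => by ring
  rw [h13] at h2
  linarith

lemma one_sub_one_sub_pow_mem {y : ℝ} (h0 : 0 ≤ y) (h1 : y ≤ 1) (k : ℕ) :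
    1 - (1 - y) ^ k ∈ Set.Icc (0 : ℝ) 1 := by
  have h2 : (1 - y) ^ k ≤ 1 := pow_le_one₀ (by linarith) (by linarith)
  have h3 : 0 ≤ (1 - y) ^ k := pow_nonneg (by linarith) k
  exact ⟨by linarith, by linarith⟩

lemma one_sub_one_sub_pow_le {y : ℝ} (h1 : y ≤ 1) (k : ℕ) :
    1 - (1 - y) ^ k ≤ k * y := by
  have := one_add_mul_le_pow (a := -y) (by linarith) k
  rw [← sub_eq_add_neg] at this
  linarith

lemma half_le_one_sub_one_sub_pow {y : ℝ} (h1 : y ≤ 1) {k : ℕ} (hk : 1 ≤ k * y) :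
    1 / 2 ≤ 1 - (1 - y) ^ k := by
  have h2 : (1 - y) ^ k ≤ Real.exp (-y) ^ k :=
    pow_le_pow_left₀ (by linarith) (by linarith [Real.add_one_le_exp (-y)]) k
  rw [← Real.exp_nat_mul] at h2
  have h3 : Real.exp (k * -y) ≤ Real.exp (-1) := Real.exp_le_exp.2 (by linarith)
  have h4 : Real.exp (-1) ≤ 1 / 2 := by
    rw [Real.exp_neg, inv_le_comm₀ (Real.exp_pos _) (by norm_num)]
    linarith [Real.add_one_le_exp 1]
  linarith

lemma measureReal_forall_dilate_expSum_lt_le {A : Finset ℤ} {Q : ℕ}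
    (hA : ∀ n ∈ A, 0 ≤ n ∧ n ≤ Q) {j k : ℕ} (hAk : A.card ^ 2 = k * 4 ^ j) (r : ℕ) (x : ℝ)
    (hg : 0 < volume.real (dyadicLevel A x j)) {H : ℕ} {P : Finset ℕ}
    (hP : ∀ p ∈ P, p.Prime ∧ p ≤ H) (hPne : P.Nonempty) :
    volume.real {α ∈ Set.Ioc x (x + 1) | ∀ p ∈ P, (‖expSum A (p * α)‖ ^ 2 / 4 ^ j) ^ r <
        volume.real (dyadicLevel A x j) / 2 ^ (r + 1)} ≤
      4 * 2 ^ r * Nat.log 2 (H * (Q * k * r)) /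
        (P.card * volume.real (dyadicLevel A x j)) := by
  set g := volume.real (dyadicLevel A x j) with hgdef
  have hcard0 : A.card ≠ 0 := by
    intro h0
    have hk : k = 0 := by
      rw [h0] at hAk
      have : k * 4 ^ j = 0 := by omega
      simpa using this
    rw [Finset.card_eq_zero] at h0
    have : dyadicLevel A x j = ∅ := by
      rw [Set.eq_empty_iff_forall_notMem]
      rintro α ⟨⟨h1, -⟩, -⟩
      rw [h0] at h1
      simp only [expSum, Finset.sum_empty, norm_zero] at h1
      exact absurd h1 (not_le.2 (by positivity))
    rw [hgdef, this] at hg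
    simp at hg
  have hNpos : (0 : ℝ) < (A.card : ℝ) ^ 2 := by positivity
  have hAkr : (A.card : ℝ) ^ 2 = k * 4 ^ j := by exact_mod_cast hAk
  set y : ℝ → ℝ := fun α => ‖expSum A α‖ ^ 2 / (A.card : ℝ) ^ 2 with hy
  have hy0 : ∀ α, 0 ≤ y α := fun α => by positivity
  have hy1 : ∀ α, y α ≤ 1 := fun α => by
    refine (div_le_one hNpos).2 ?_
    gcongr
    exact norm_expSum_le A α
  have hky : ∀ α, k * y α = ‖expSum A α‖ ^ 2 / 4 ^ j := by
    intro α
    have hk : (k : ℝ) ≠ 0 := by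
      rintro h
      rw [h, zero_mul] at hAkr
      linarith
    rw [hy]
    simp only [hAkr]
    field_simp
  set χ : ℝ → ℝ := fun α => (1 - (1 - y α) ^ k) ^ r with hχ
  have hχt : IsTrigPoly (Q * k * r) χ :=
    ((isTrigPoly_norm_expSum_sq_div hA _).one_sub.pow k).one_sub.pow r
  have hmem := fun α => one_sub_one_sub_pow_mem (hy0 α) (hy1 α) k
  have hχ0 : ∀ α, 0 ≤ χ α := fun α => pow_nonneg (hmem α).1 r
  have hχ1 : ∀ α, χ α ≤ 1 := fun α => pow_le_one₀ (hmem α).1 (hmem α).2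
  have hχle : ∀ α, χ α ≤ (‖expSum A α‖ ^ 2 / 4 ^ j) ^ r := fun α => by
    rw [← hky]
    exact pow_le_pow_left₀ (hmem α).1 (one_sub_one_sub_pow_le (hy1 α) k) r
  have hmean : g / 2 ^ r ≤ ∫ α in x..x + 1, χ α := by
    rw [hgdef, ← integral_ite_dyadic, div_eq_mul_inv, ← intervalIntegral.integral_mul_const]
    refine intervalIntegral.integral_mono_on (by linarith)
      ((intervalIntegrable_ite_dyadic A x j).mul_const _)
      (hχt.continuous.intervalIntegrable _ _) fun α _ => ?_
    split_ifs with h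
    · rw [one_mul, ← inv_pow]
      refine pow_le_pow_left₀ (by norm_num) ?_ r
      rw [inv_eq_one_div]
      refine half_le_one_sub_one_sub_pow (hy1 α) ?_
      rw [hky, le_div_iff₀ (by positivity), one_mul, show (4 : ℝ) ^ j = (2 ^ j) ^ 2 by
        rw [← pow_mul, mul_comm, pow_mul]; norm_num]
      gcongr
      exact h.1
    · rw [zero_mul]
      exact hχ0 α
  have hgr : 0 < g / 2 ^ r := by positivity
  have hcard : (0 : ℝ) < P.card := by exact_mod_cast hPne.card_pos
  have hmain := hχt.measureReal_forall_dilate_lt_le hχ0 hχ1 x rfl (hgr.trans_le hmean) hP hPne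
  calc _ ≤ volume.real {α ∈ Set.Ioc x (x + 1) | ∀ p ∈ P, χ (p * α) <
        (∫ α in x..x + 1, χ α) / 2} := by
        refine measureReal_mono ?_ (ne_top_of_le_ne_top ?_ (measure_mono (Set.sep_subset _ _)))
        · rintro α ⟨hα, hlt⟩
          refine ⟨hα, fun p hp => (hχle _).trans_lt ((hlt p hp).trans_le ?_)⟩
          rw [pow_succ, ← div_div]
          linarith
        · simp
    _ ≤ _ := hmain
    _ ≤ 4 * Nat.log 2 (H * (Q * k * r)) / (P.card * (g / 2 ^ r)) := by
        gcongr
    _ = _ := by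
        field_simp

lemma eventually_const_mul_pow_le_two_pow_rpow (C : ℝ) (d : ℕ) {θ : ℝ} (hθ : 0 < θ) :
    ∀ᶠ m : ℕ in atTop, C * ((m : ℝ) + 1) ^ d ≤ ((2 : ℝ) ^ m) ^ θ := by
  have hb : 1 < (2 : ℝ) ^ θ := Real.one_lt_rpow one_lt_two hθ
  have ht := ((tendsto_pow_const_div_const_pow_of_one_lt d hb).comp (tendsto_add_atTop_nat 1)).const_mul
    (C * 2 ^ θ)
  rw [mul_zero] at ht
  filter_upwards [ht.eventually_le_const zero_lt_one] with m hm
  have hpow : ((2 : ℝ) ^ m) ^ θ = ((2 : ℝ) ^ θ) ^ m := by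
    rw [← Real.rpow_natCast, ← Real.rpow_natCast, ← Real.rpow_mul zero_le_two,
      ← Real.rpow_mul zero_le_two, mul_comm]
  rw [hpow]
  set b := (2 : ℝ) ^ θ
  have hb0 : 0 < b := by linarith
  simp only [Function.comp_apply] at hm
  rw [← mul_div_assoc, div_le_one (by positivity), pow_succ b m] at hm
  push_cast at hm
  have h2 : b * (C * ((m : ℝ) + 1) ^ d) ≤ b * b ^ m := by linarith
  exact le_of_mul_le_mul_left h2 hb0

lemma FewPopularDiffs.exists_dyadicLevel {A : Finset ℤ} (hA : FewPopularDiffs A) {m : ℕ}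
    (hm : 1 ≤ m) (hcard : A.card = 2 ^ m) (x : ℝ) :
    ∃ j ≤ m, ((2 : ℝ) ^ m) ^ 14 ≤
      4096 ^ 26 * (2 ^ 26 * 150 ^ 5 * (256 * 600 ^ 6 * 75 ^ 3)) * ((m : ℝ) + 1) ^ 88 *
        (2 ^ j * volume.real (dyadicLevel A x j)) ^ 52 := by
  have h2 : 2 ≤ A.card := by
    rw [hcard]
    calc 2 = 2 ^ 1 := rfl
      _ ≤ 2 ^ m := Nat.pow_le_pow_right (by norm_num) hm
  obtain ⟨j, hj, hle⟩ := exists_large_dyadicLevel h2 x (L := m + 1)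
    (by rw [hcard]; exact Nat.pow_lt_pow_right (by norm_num) (Nat.lt_succ_self m))
  refine ⟨j, Nat.lt_succ_iff.1 hj, ?_⟩
  have hE := hA.energy_le
  rw [hcard, Nat.log_pow (by norm_num)] at hE
  rw [hcard] at hle
  push_cast at hle hE
  generalize (2 ^ 26 * 150 ^ 5 * (256 * 600 ^ 6 * 75 ^ 3) : ℝ) = c₂ at hE ⊢
  set X := (2 : ℝ) ^ m with hX
  have hX0 : 0 < X := by positivity
  set E := ∑ d ∈ A - A, (diffCount A A d : ℝ) ^ 2
  have hE0 : 0 ≤ E := Finset.sum_nonneg fun d _ => by positivity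
  set v := 2 ^ j * volume.real (dyadicLevel A x j)
  set M := (m : ℝ) + 1
  have h26 : (X ^ 3) ^ 26 ≤ (4096 * E * M ^ 2 * v ^ 2) ^ 26 := by gcongr
  have e1 : (X ^ 3) ^ 26 = X ^ 64 * X ^ 14 := by ring
  have e2 : (4096 * E * M ^ 2 * v ^ 2) ^ 26 = 4096 ^ 26 * M ^ 52 * v ^ 52 * E ^ 26 := by
    generalize (4096 : ℝ) = c
    ring
  rw [e1, e2] at h26
  generalize h4096 : (4096 : ℝ) ^ 26 = c₁ at h26 ⊢
  have hc₁ : 0 < c₁ := h4096 ▸ pow_pos (by norm_num) 26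
  have h27 : c₁ * M ^ 52 * v ^ 52 * E ^ 26 ≤ c₁ * M ^ 52 * v ^ 52 *
      (c₂ * M ^ 36 * X ^ 64) := by
    refine mul_le_mul_of_nonneg_left hE (mul_nonneg (mul_nonneg hc₁.le ?_) ?_)
    · exact pow_nonneg (by positivity) 52
    · exact (Even.pow_nonneg (by decide) v)
  refine le_of_mul_le_mul_left (h26.trans (h27.trans (le_of_eq ?_))) (pow_pos hX0 64)
  ring

lemma le_primeCounting_of_log_le {H : ℕ} (hH : 8 ≤ H) {M : ℝ} (hM : Real.log H ≤ M) :
    (H : ℝ) / (3 * M) ≤ (Nat.primesLE H).card := by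
  have hH' : (8 : ℝ) ≤ H := by exact_mod_cast hH
  have hlog : 0 < Real.log H := Real.log_pos (by linarith)
  rw [Nat.primesLE_card_eq_primeCounting]
  refine le_trans ?_ (Chebyshev.pi_ge H)
  have h1 : Real.log ((H + 1) / 16) ≤ (H + 1) / 16 - 1 := Real.log_le_sub_one_of_pos (by positivity)
  rw [Real.log_div (by positivity) (by norm_num), show (16 : ℝ) = 2 ^ 4 by norm_num,
    Real.log_pow] at h1
  have h2 := Real.log_two_lt_d9
  have h3 := Real.log_two_gt_d9
  have h4 : (H : ℝ) / 3 ≤ H * Real.log 2 - Real.log (H + 1) := by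
    push_cast at h1
    nlinarith
  rw [← div_div]
  exact div_le_div₀ (le_trans (by positivity) h4) h4 hlog hM

lemma natLog_le_of_le_exp {n : ℕ} (hn : n ≠ 0) {t : ℝ} (h : (n : ℝ) ≤ Real.exp t) (ht : 0 ≤ t) :
    (Nat.log 2 n : ℝ) ≤ 2 * t := by
  refine (Real.natLog_le_logb n 2).trans ?_
  have h1 : Real.log n ≤ t := (Real.log_le_iff_le_exp (by positivity)).2 h
  have h3 := Real.log_two_gt_d9
  push_cast
  rw [Real.logb, div_le_iff₀ (by linarith)]
  nlinarith

lemma le_mul_starDisc_of_expSum_dilate {p r : ℕ} {X δ lam g S D : ℝ}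
    (hX : 1 ≤ X) (hr : 1 ≤ δ * r) (hr0 : r ≠ 0) (hlam : 0 < lam) (hg : X⁻¹ ≤ g)
    (hrX : 2 ^ (r + 1) ≤ X) (hpi : 4 * Real.pi ≤ X ^ δ) (hv : X ^ ((7 : ℝ) / 26 - δ) ≤ lam * g)
    (hp : (p : ℝ) * g ≤ 2 * X ^ (3 * δ)) (hS0 : 0 ≤ S)
    (hS : g / 2 ^ (r + 1) ≤ (S ^ 2 / lam ^ 2) ^ r) (hSD : S ≤ 2 * Real.pi * p * D) (hD : 0 ≤ D) :
    X ^ ((7 : ℝ) / 26 - 6 * δ) ≤ D := by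
  have hX0 : 0 < X := by linarith
  have hg0 : 0 < g := lt_of_lt_of_le (by positivity) hg
  have hSlam : lam * X ^ (-δ) ≤ S := by
    by_contra hlt
    push Not at hlt
    have h1 : S ^ 2 / lam ^ 2 < (X ^ (-δ)) ^ 2 := by
      rw [div_lt_iff₀ (by positivity), ← mul_pow, mul_comm]
      exact pow_lt_pow_left₀ hlt hS0 (by norm_num)
    have h2 : (S ^ 2 / lam ^ 2) ^ r < ((X ^ (-δ)) ^ 2) ^ r :=
      pow_lt_pow_left₀ h1 (by positivity) hr0
    have h3 : ((X ^ (-δ)) ^ 2) ^ r ≤ X ^ (-2 : ℝ) := by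
      rw [← pow_mul, ← Real.rpow_natCast, ← Real.rpow_mul hX0.le]
      refine Real.rpow_le_rpow_of_exponent_le hX ?_
      push_cast
      nlinarith
    have h4 : X ^ (-2 : ℝ) ≤ g / 2 ^ (r + 1) := by
      rw [le_div_iff₀ (by positivity)]
      calc X ^ (-2 : ℝ) * 2 ^ (r + 1) ≤ X ^ (-2 : ℝ) * X := by gcongr
        _ = X⁻¹ := by
          rw [← Real.rpow_add_one hX0.ne', ← Real.rpow_neg_one]
          norm_num
        _ ≤ g := hg
    linarith
  have h5 : lam * X ^ (-δ) * g ≤ X ^ δ * X ^ (3 * δ) * D := by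
    calc lam * X ^ (-δ) * g ≤ (2 * Real.pi * p * D) * g :=
          mul_le_mul_of_nonneg_right (hSlam.trans hSD) hg0.le
      _ = 2 * Real.pi * D * (p * g) := by ring
      _ ≤ 2 * Real.pi * D * (2 * X ^ (3 * δ)) := by gcongr
      _ = 4 * Real.pi * X ^ (3 * δ) * D := by ring
      _ ≤ _ := by gcongr
  have h6 : X ^ (5 * δ) * X ^ ((7 : ℝ) / 26 - 6 * δ) ≤ X ^ (5 * δ) * D := by
    calc X ^ (5 * δ) * X ^ ((7 : ℝ) / 26 - 6 * δ) = X ^ ((7 : ℝ) / 26 - δ) := by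
          rw [← Real.rpow_add hX0]
          ring_nf
      _ ≤ lam * g := hv
      _ = X ^ δ * (lam * X ^ (-δ) * g) := by
          have : X ^ δ * X ^ (-δ) = 1 := by rw [← Real.rpow_add hX0]; simp
          linear_combination (-(lam * g)) * this
      _ ≤ X ^ δ * (X ^ δ * X ^ (3 * δ) * D) := by gcongr
      _ = X ^ (5 * δ) * D := by
          rw [← mul_assoc, ← Real.rpow_add hX0, ← Real.rpow_add hX0]
          ring_nf
  exact le_of_mul_le_mul_left h6 (by positivity)

lemma eventually_exists_dyadicLevel {δ : ℝ} (hδ : 0 < δ) :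
    ∀ᶠ m : ℕ in atTop, ∀ A : Finset ℤ, FewPopularDiffs A → A.card = 2 ^ m → ∀ x : ℝ,
      ∃ j ≤ m, ((2 : ℝ) ^ m) ^ ((7 : ℝ) / 26 - δ) ≤
        2 ^ j * volume.real (dyadicLevel A x j) := by
  obtain ⟨c, hc⟩ : ∃ c : ℝ, c = 4096 ^ 26 * (2 ^ 26 * 150 ^ 5 * (256 * 600 ^ 6 * 75 ^ 3)) :=
    ⟨_, rfl⟩
  filter_upwards [eventually_ge_atTop 1,
    eventually_const_mul_pow_le_two_pow_rpow c 88 (θ := 52 * δ) (by positivity)]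
    with m hm hcons A hA hcard x
  obtain ⟨j, hjm, hjle⟩ := hA.exists_dyadicLevel hm hcard x
  refine ⟨j, hjm, ?_⟩
  rw [← hc] at hjle
  set X := (2 : ℝ) ^ m with hX
  have hX0 : 0 < X := by positivity
  set v := 2 ^ j * volume.real (dyadicLevel A x j) with hv
  have hv0 : 0 ≤ v := mul_nonneg (by positivity) measureReal_nonneg
  by_contra hlt
  push Not at hlt
  have h1 : v ^ 52 < (X ^ ((7 : ℝ) / 26 - δ)) ^ 52 := pow_lt_pow_left₀ hlt hv0 (by norm_num)
  have h2 : X ^ (52 * δ) * (X ^ ((7 : ℝ) / 26 - δ)) ^ 52 = X ^ 14 := by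
    rw [← Real.rpow_natCast (X ^ _), ← Real.rpow_mul hX0.le, ← Real.rpow_add hX0,
      ← Real.rpow_natCast X 14]
    congr 1
    push_cast
    ring
  have h3 : X ^ 14 ≤ X ^ (52 * δ) * v ^ 52 :=
    hjle.trans (mul_le_mul_of_nonneg_right hcons (pow_nonneg hv0 52))
  have h4 := mul_lt_mul_of_pos_left h1 (Real.rpow_pos_of_pos hX0 (52 * δ))
  exact absurd (h3.trans_lt (h4.trans_eq h2)) (lt_irrefl _)

lemma log_two_pow_le (m : ℕ) : Real.log ((2 : ℝ) ^ m) ≤ m + 1 := by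
  have hlog2 := Real.log_two_lt_d9
  have hm0 : (0 : ℝ) ≤ m := Nat.cast_nonneg m
  rw [Real.log_pow]
  nlinarith

lemma natLog_product_le {m i H Q r : ℕ} {X C γ : ℝ} (hX : X = 2 ^ m) (hC : 0 < C) (hγ : 0 ≤ γ)
    (hH0 : H ≠ 0) (hQ0 : Q ≠ 0) (hr0 : r ≠ 0) (hH : (H : ℝ) ≤ X ^ 2)
    (hQ : (Q : ℝ) ≤ C * Real.exp (γ * Real.log X ^ 2)) (hi : i ≤ m) :
    (Nat.log 2 (H * (Q * 4 ^ i * r)) : ℝ) ≤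
      2 * (4 + |Real.log C| + γ + Real.log r) * ((m : ℝ) + 1) ^ 2 := by
  have hk : (4 : ℝ) ^ i ≤ X ^ 2 := by
    calc (4 : ℝ) ^ i ≤ 4 ^ m := pow_le_pow_right₀ (by norm_num) hi
      _ = X ^ 2 := by
        rw [hX, ← pow_mul, mul_comm, pow_mul]
        norm_num
  have hX0 : 0 < X := by
    rw [hX]
    positivity
  have hr : (0 : ℝ) < r := by exact_mod_cast Nat.pos_of_ne_zero hr0
  have hlogr : 0 ≤ Real.log r :=
    Real.log_nonneg (by exact_mod_cast Nat.one_le_iff_ne_zero.2 hr0)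
  have hlogX : Real.log X ≤ m + 1 := hX ▸ log_two_pow_le m
  have hlogX0 : 0 ≤ Real.log X := Real.log_nonneg (hX ▸ one_le_pow₀ (by norm_num))
  have hle : ((H * (Q * 4 ^ i * r) : ℕ) : ℝ) ≤
      Real.exp (4 * Real.log X + |Real.log C| + γ * Real.log X ^ 2 + Real.log r) := by
    have h1 : C ≤ Real.exp |Real.log C| := by
      calc C = Real.exp (Real.log C) := (Real.exp_log hC).symm
        _ ≤ _ := Real.exp_le_exp.2 (le_abs_self _)
    have h4 : Real.exp (4 * Real.log X) = X ^ 4 := by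
      rw [show (4 : ℝ) * Real.log X = ((4 : ℕ) : ℝ) * Real.log X by norm_num, Real.exp_nat_mul,
        Real.exp_log hX0]
    rw [Real.exp_add, Real.exp_add, Real.exp_add, h4, Real.exp_log hr]
    push_cast
    calc (H : ℝ) * (Q * 4 ^ i * r) ≤ X ^ 2 * ((C * Real.exp (γ * Real.log X ^ 2)) * X ^ 2 * r) := by
          gcongr
      _ ≤ X ^ 2 * ((Real.exp |Real.log C| * Real.exp (γ * Real.log X ^ 2)) * X ^ 2 * r) := by gcongr
      _ = _ := by ring
  refine (natLog_le_of_le_exp (by positivity) hle (by positivity)).trans ?_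
  rw [mul_assoc]
  gcongr
  have hM : (1 : ℝ) ≤ (m : ℝ) + 1 := by linarith [(Nat.cast_nonneg m : (0 : ℝ) ≤ m)]
  set M := (m : ℝ) + 1
  have hM2 : M ≤ M ^ 2 := by nlinarith
  have h5 : 4 * Real.log X ≤ 4 * M ^ 2 := by linarith
  have h6 : |Real.log C| ≤ |Real.log C| * M ^ 2 :=
    le_mul_of_one_le_right (abs_nonneg _) (by linarith)
  have h7 : γ * Real.log X ^ 2 ≤ γ * M ^ 2 := by gcongr
  have h8 : Real.log r ≤ Real.log r * M ^ 2 := le_mul_of_one_le_right hlogr (by linarith)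
  linarith

lemma eventually_measureReal_mul_starDisc_lt_le {a : ℕ → ℕ}
    (hmono : StrictMono fun i => (a (i + 1) : ℤ)) (hpos : ∀ n : ℕ, 1 ≤ n → 0 < a n)
    (hfew : ∀ N, FewPopularDiffs ((Finset.range N).image fun i => (a (i + 1) : ℤ)))
    {γ C : ℝ} (hγ : 0 < γ) (hC : 0 < C)
    (hgrowth : ∀ n : ℕ, 1 ≤ n → (a n : ℝ) ≤ C * Real.exp (γ * (Real.log n) ^ 2))
    {δ : ℝ} (hδ : 0 < δ) (hδ' : δ ≤ 1 / 10) (x : ℝ) :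
    ∀ᶠ m : ℕ in atTop, volume.real {α ∈ Set.Ioc x (x + 1) |
      ((2 ^ m : ℕ) : ℝ) * starDisc (2 ^ m) (fun n => Int.fract ((a n : ℝ) * α)) <
        ((2 ^ m : ℕ) : ℝ) ^ ((7 : ℝ) / 26 - 6 * δ)} ≤ ((2 : ℝ) ^ m) ^ (-δ) := by
  set r := ⌈1 / δ⌉₊ with hr
  have hr1 : 1 ≤ δ * r := by
    have := Nat.le_ceil (1 / δ)
    rwa [div_le_iff₀ hδ, mul_comm] at this
  have hr0 : r ≠ 0 := by
    intro h
    rw [h] at hr1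
    norm_num at hr1
  have hrr : (1 : ℝ) ≤ r := by exact_mod_cast Nat.one_le_iff_ne_zero.2 hr0
  set C₂ := 4 + |Real.log C| + γ + Real.log r with hC₂
  have hlogr : 0 ≤ Real.log r := Real.log_nonneg hrr
  have hC₂0 : 0 ≤ C₂ := by positivity
  filter_upwards [eventually_exists_dyadicLevel hδ,
    eventually_const_mul_pow_le_two_pow_rpow (2 ^ (r + 1)) 0 zero_lt_one,
    eventually_const_mul_pow_le_two_pow_rpow (4 * Real.pi) 0 hδ,
    eventually_const_mul_pow_le_two_pow_rpow 8 0 (θ := 3 * δ) (by positivity),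
    eventually_const_mul_pow_le_two_pow_rpow (4 * 2 ^ r * (2 * C₂) * 6) 3
      (θ := 2 * δ) (by positivity)] with m hlevel hrX hpi h8 hfin
  rw [pow_zero, mul_one] at hrX hpi h8
  rw [Real.rpow_one] at hrX
  set A := (Finset.range (2 ^ m)).image fun i => (a (i + 1) : ℤ) with hA
  have hcard : A.card = 2 ^ m := by
    rw [hA, Finset.card_image_of_injective _ hmono.injective, Finset.card_range]
  have hsum : ∀ α : ℝ, expSum A α = ∑ n ∈ Finset.Icc 1 (2 ^ m), expi (a n * α) := by
    intro α
    rw [expSum, hA, Finset.sum_image hmono.injective.injOn, Finset.range_eq_Ico,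
      Finset.sum_Ico_add' (fun n => expi (((a n : ℤ) : ℝ) * α)) 0 (2 ^ m) 1]
    rfl
  obtain ⟨j, hjm, hv⟩ := hlevel A (hfew (2 ^ m)) hcard x
  set g := volume.real (dyadicLevel A x j) with hg
  push_cast
  set X := (2 : ℝ) ^ m with hX
  have hX1 : 1 ≤ X := one_le_pow₀ (by norm_num)
  have hX0 : 0 < X := by linarith
  have hg0 : 0 ≤ g := measureReal_nonneg
  have hjX : (2 : ℝ) ^ j ≤ X := pow_le_pow_right₀ (by norm_num) hjm
  have hgX : X⁻¹ ≤ g := by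
    have h1 : 1 ≤ X ^ ((7 : ℝ) / 26 - δ) := Real.one_le_rpow hX1 (by linarith)
    rw [inv_le_iff_one_le_mul₀ hX0, mul_comm]
    exact h1.trans (hv.trans (mul_le_mul_of_nonneg_right hjX hg0))
  have hgpos : 0 < g := lt_of_lt_of_le (by positivity) hgX
  have hg1 : g ≤ 1 := by
    have h1 : g ≤ volume.real (Set.Ioc x (x + 1)) :=
      measureReal_mono Set.inter_subset_right (by simp)
    simpa using h1
  set Y := X ^ (3 * δ) with hY
  set H := ⌈Y / g⌉₊ with hH
  have hYg : Y ≤ Y / g := by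
    exact le_div_self (by positivity) hgpos hg1
  have hHge : Y / g ≤ H := Nat.le_ceil _
  have hHle : (H : ℝ) ≤ 2 * (Y / g) := by
    have := (Nat.ceil_lt_add_one (show 0 ≤ Y / g by positivity)).le
    linarith
  have hH8 : 8 ≤ H := by
    have : (8 : ℝ) ≤ H := by linarith
    exact_mod_cast this
  have hHg : (H : ℝ) * g ≤ 2 * Y := by
    calc (H : ℝ) * g ≤ 2 * (Y / g) * g := by gcongr
      _ = 2 * Y := by field_simp
  have hHg' : Y ≤ H * g := by rwa [div_le_iff₀ hgpos] at hHge
  have hHX : (H : ℝ) ≤ X ^ 2 := by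
    have h2 : (2 : ℝ) ≤ X ^ δ := by linarith [Real.pi_gt_three]
    have h3 : 2 * Y ≤ X := by
      calc 2 * Y ≤ X ^ δ * X ^ (3 * δ) := by gcongr
        _ = X ^ (4 * δ) := by
          rw [← Real.rpow_add hX0]
          ring_nf
        _ ≤ X ^ (1 : ℝ) := Real.rpow_le_rpow_of_exponent_le hX1 (by linarith)
        _ = X := Real.rpow_one X
    have h4 : (H : ℝ) ≤ 2 * Y * g⁻¹ := by
      rw [← div_eq_mul_inv, le_div_iff₀ hgpos]
      exact hHg
    have h5 : g⁻¹ ≤ X := inv_le_of_inv_le₀ hX0 hgX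
    calc (H : ℝ) ≤ 2 * Y * g⁻¹ := h4
      _ ≤ X * X := by gcongr
      _ = X ^ 2 := by ring
  have hlogXm : Real.log X ≤ m + 1 := log_two_pow_le m
  have hcardP : (H : ℝ) / (6 * (m + 1)) ≤ (Nat.primesLE H).card := by
    have h1 : Real.log H ≤ 2 * (m + 1) := by
      have h2 : Real.log H ≤ Real.log (X ^ 2) := Real.log_le_log (by positivity) hHX
      rw [Real.log_pow] at h2
      push_cast at h2
      linarith
    have h3 := le_primeCounting_of_log_le hH8 h1
    rwa [← mul_assoc, show (3 : ℝ) * 2 = 6 by norm_num] at h3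
  have hPpos : (0 : ℝ) < (Nat.primesLE H).card := lt_of_lt_of_le (by positivity) hcardP
  have hPne : (Nat.primesLE H).Nonempty := Finset.card_pos.1 (by exact_mod_cast hPpos)
  have hP : ∀ p ∈ Nat.primesLE H, p.Prime ∧ p ≤ H := fun p hp =>
    ⟨Nat.prime_of_mem_primesLE hp, Nat.le_of_mem_primesLE hp⟩
  have hAQ : ∀ n ∈ A, 0 ≤ n ∧ n ≤ a (2 ^ m) := by
    intro n hn
    obtain ⟨i, hi, rfl⟩ := Finset.mem_image.1 hn
    refine ⟨Int.natCast_nonneg _, ?_⟩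
    have h1 : i ≤ 2 ^ m - 1 := by
      have := Finset.mem_range.1 hi
      omega
    have h2 := hmono.monotone h1
    simpa only [Nat.sub_add_cancel Nat.one_le_two_pow] using h2
  have hAk : A.card ^ 2 = 4 ^ (m - j) * 4 ^ j := by
    rw [hcard, ← pow_add, Nat.sub_add_cancel hjm, ← pow_mul, mul_comm, pow_mul]
    norm_num
  have hmain := measureReal_forall_dilate_expSum_lt_le hAQ hAk r x hgpos hP hPne
  have hK : (Nat.log 2 (H * (a (2 ^ m) * 4 ^ (m - j) * r)) : ℝ) ≤ 2 * C₂ * ((m : ℝ) + 1) ^ 2 := by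
    have hQ0 := hpos (2 ^ m) Nat.one_le_two_pow
    have hQ := hgrowth (2 ^ m) Nat.one_le_two_pow
    push_cast at hQ
    rw [← hX] at hQ
    refine natLog_product_le hX hC hγ.le (by omega) hQ0.ne' hr0 hHX hQ ?_
    exact (Nat.sub_le m j)
  refine le_trans (measureReal_mono ?_ (ne_top_of_le_ne_top ?_ (measure_mono (Set.sep_subset _ _))))
    (hmain.trans ?_)
  · rintro α ⟨hα, hlt⟩
    refine ⟨hα, fun p hp => ?_⟩
    by_contra hge
    push Not at hge
    refine absurd hlt (not_lt.2 ?_)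
    have hp0 := (hP p hp).1.ne_zero
    have hkok := norm_sum_expi_le_mul_starDisc (N := 2 ^ m) (h := p) (by positivity) hp0
      (x := fun n => Int.fract ((a n : ℝ) * α))
      fun n => ⟨Int.fract_nonneg _, Int.fract_lt_one _⟩
    simp only [expi_mul_fract] at hkok
    have hS : ∑ n ∈ Finset.Icc 1 (2 ^ m), expi (p * (a n * α)) = expSum A (p * α) := by
      rw [hsum]
      refine Finset.sum_congr rfl fun n _ => ?_
      congr 1
      ring
    rw [hS] at hkok
    push_cast at hkok
    rw [← hX] at hkok
    have hpH : (p : ℝ) ≤ H := by exact_mod_cast (hP p hp).2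
    have hp00 : (0 : ℝ) < p := by exact_mod_cast Nat.pos_of_ne_zero hp0
    refine le_mul_starDisc_of_expSum_dilate (lam := 2 ^ j) (g := g) (r := r) (p := p) hX1 hr1 hr0
      (by positivity) hgX hrX hpi hv ((mul_le_mul_of_nonneg_right hpH hg0).trans hHg)
      (norm_nonneg _) ?_ hkok ?_
    · rwa [show ((2 : ℝ) ^ j) ^ 2 = 4 ^ j by
        rw [← pow_mul, mul_comm, pow_mul]; norm_num]
    · exact mul_nonneg hX0.le (Real.iSup_nonneg fun β => abs_nonneg _)
  · simp
  · have h1 : Y / (6 * (m + 1)) ≤ (Nat.primesLE H).card * g := by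
      calc Y / (6 * (m + 1)) ≤ H * g / (6 * (m + 1)) := by gcongr
        _ = H / (6 * (m + 1)) * g := by ring
        _ ≤ _ := by gcongr
    have hY0 : 0 < Y := by positivity
    calc _ ≤ 4 * 2 ^ r * (2 * C₂ * ((m : ℝ) + 1) ^ 2) / (Y / (6 * (m + 1))) := by gcongr
      _ = (4 * 2 ^ r * (2 * C₂) * 6 * ((m : ℝ) + 1) ^ 3) / Y := by field_simp
      _ ≤ X ^ (2 * δ) / Y := by gcongr
      _ = X ^ (-δ) := by
        rw [hY, ← Real.rpow_sub hX0]
        ring_nf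

lemma ae_eventually_notMem_of_measureReal_le {s : ℕ → Set ℝ} (hs : ∀ m, volume (s m) ≠ ⊤)
    {q : ℝ} (hq0 : 0 ≤ q) (hq1 : q < 1) (h : ∀ᶠ m : ℕ in atTop, volume.real (s m) ≤ q ^ m) :
    ∀ᵐ α ∂(volume : Measure ℝ), ∀ᶠ m : ℕ in atTop, α ∉ s m := by
  obtain ⟨M, hM⟩ := eventually_atTop.1 h
  have hle : ∀ m, volume (⋃ _ : M ≤ m, s m) ≤ ENNReal.ofReal (q ^ m) := by
    intro m
    by_cases hm : M ≤ m
    · simp only [hm, Set.iUnion_true]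
      rw [← ENNReal.ofReal_toReal (hs m)]
      exact ENNReal.ofReal_le_ofReal (hM m hm)
    · simp [hm]
  have hsum : ∑' m, volume (⋃ _ : M ≤ m, s m) ≠ ⊤ :=
    ne_top_of_le_ne_top (summable_geometric_of_lt_one hq0 hq1).tsum_ofReal_ne_top
      (ENNReal.tsum_le_tsum hle)
  filter_upwards [ae_eventually_notMem hsum] with α hα
  filter_upwards [hα, eventually_ge_atTop M] with m hm hMm
  simpa [hMm] using hm

theorem stmt2 (a : ℕ → ℕ)
    (ha_incr : ∀ n : ℕ, 1 ≤ n → a n < a (n + 1))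
    (ha_pos : ∀ n : ℕ, 1 ≤ n → 0 < a n)
    (γ C : ℝ) (hγ : 0 < γ) (hC : 0 < C)
    (hgrowth : ∀ n : ℕ, 1 ≤ n → (a n : ℝ) ≤ C * Real.exp (γ * (Real.log n) ^ 2))
    (hconvex : ∀ n : ℕ, 2 ≤ n → (a n : ℤ) - a (n - 1) < (a (n + 1) : ℤ) - a n) :
    ∀ᵐ α ∂(volume : Measure ℝ), ∀ ε > 0, ∃ᶠ N : ℕ in atTop,
      (N : ℝ) * starDisc N (fun n => Int.fract ((a n : ℝ) * α)) ≥
        (N : ℝ) ^ ((7 : ℝ) / 26 - ε) := by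
  have hmono : StrictMono fun i => (a (i + 1) : ℤ) :=
    strictMono_nat_of_lt_succ fun i => by exact_mod_cast ha_incr (i + 1) (by omega)
  have hfew : ∀ N, FewPopularDiffs ((Finset.range N).image fun i => (a (i + 1) : ℤ)) :=
    fewPopularDiffs_of_convex hmono fun i => hconvex (i + 2) (by omega)
  have hδ : ∀ k : ℕ, 0 < 1 / (10 * ((k : ℝ) + 1)) := fun k => by positivity
  have hδ' : ∀ k : ℕ, 1 / (10 * ((k : ℝ) + 1)) ≤ 1 / 10 := fun k =>
    one_div_le_one_div_of_le (by norm_num) (by linarith [(Nat.cast_nonneg k : (0 : ℝ) ≤ k)])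
  have key : ∀ᵐ α ∂(volume : Measure ℝ), ∀ (z : ℤ) (k : ℕ), ∀ᶠ m : ℕ in atTop,
      α ∉ {α ∈ Set.Ioc (z : ℝ) (z + 1) |
        ((2 ^ m : ℕ) : ℝ) * starDisc (2 ^ m) (fun n => Int.fract ((a n : ℝ) * α)) <
          ((2 ^ m : ℕ) : ℝ) ^ ((7 : ℝ) / 26 - 6 * (1 / (10 * ((k : ℝ) + 1))))} := by
    rw [ae_all_iff]
    intro z
    rw [ae_all_iff]
    intro k
    refine ae_eventually_notMem_of_measureReal_le (q := (2 : ℝ) ^ (-(1 / (10 * ((k : ℝ) + 1)))))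
      (fun m => ne_top_of_le_ne_top (by simp) (measure_mono (Set.sep_subset _ _))) (by positivity)
      (Real.rpow_lt_one_of_one_lt_of_neg one_lt_two (by linarith [hδ k])) ?_
    filter_upwards [eventually_measureReal_mul_starDisc_lt_le hmono ha_pos hfew hγ hC hgrowth
      (hδ k) (hδ' k) z] with m hm
    refine hm.trans (le_of_eq ?_)
    rw [← Real.rpow_natCast, ← Real.rpow_natCast, ← Real.rpow_mul zero_le_two,
      ← Real.rpow_mul zero_le_two, mul_comm]
  filter_upwards [key] with α hα ε hε
  obtain ⟨k, hk⟩ := exists_nat_one_div_lt hε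
  have hev := hα (⌈α⌉ - 1) k
  refine Tendsto.frequently (tendsto_pow_atTop_atTop_of_one_lt one_lt_two) (Eventually.frequently ?_)
  filter_upwards [hev] with m hm
  have hmem : α ∈ Set.Ioc (((⌈α⌉ - 1 : ℤ) : ℝ)) ((⌈α⌉ - 1 : ℤ) + 1) := by
    push_cast
    exact ⟨by linarith [Int.ceil_lt_add_one α], by linarith [Int.le_ceil α]⟩
  have hge := not_lt.1 fun h => hm ⟨hmem, h⟩
  refine le_trans (Real.rpow_le_rpow_of_exponent_le ?_ ?_) hge
  · exact_mod_cast Nat.one_le_two_pow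
  · have : 6 * (1 / (10 * ((k : ℝ) + 1))) = 3 / 5 * (1 / ((k : ℝ) + 1)) := by
      field_simp
      norm_num
    have h2 : 0 < 1 / ((k : ℝ) + 1) := by positivity
    linarith
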